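/- (Proposition 6) Let δ be a rectifiable Jordan curve and U the Jordan domain bounded by δ. Let f : δ* → ℂ be a continuous function such that ∫_δ P(z) f(z) dz = 0 for every analytic polynomial P. Then there exists a holomorphic function φ on U such that for almost every ζ ∈ δ* with respect to the arclength measure on δ*, φ has nontangential limit f(ζ) at ζ. -/

import Mathlib

open Set Filter Topology Polynomial MeasureTheory

/-- `I` is the Riemann–Stieltjes integral `∫_a^b g (δ t) dδ(t)`: for every `ε > 0` there is a
mesh size `d > 0` such that every Riemann–Stieltjes sum over a tagged partition of `[a, b]` of
mesh `< d` is `ε`-close to `I`. -/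
def IsRSIntegral (g : ℂ → ℂ) (δ : ℝ → ℂ) (a b : ℝ) (I : ℂ) : Prop :=
  ∀ ε > (0 : ℝ), ∃ d > (0 : ℝ), ∀ (n : ℕ) (t : Fin (n + 1) → ℝ) (ξ : Fin n → ℝ),
    Monotone t → t 0 = a → t (Fin.last n) = b →
    (∀ i : Fin n, ξ i ∈ Set.Icc (t i.castSucc) (t i.succ)) →
    (∀ i : Fin n, t i.succ - t i.castSucc < d) →
    ‖(∑ i : Fin n, g (δ (ξ i)) * (δ (t i.succ) - δ (t i.castSucc))) - I‖ < ε

/-- `δ : [a, b] → ℂ` is a rectifiable Jordan curve: continuous, of bounded variation,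
closed (`δ a = δ b`) and injective on `[a, b)`. -/
def IsRectifiableJordanCurve (δ : ℝ → ℂ) (a b : ℝ) : Prop :=
  a < b ∧ ContinuousOn δ (Set.Icc a b) ∧ BoundedVariationOn δ (Set.Icc a b) ∧
    δ a = δ b ∧ Set.InjOn δ (Set.Ico a b)

/-!
Parametrize the curve by arclength and let `C h z` be the Cauchy integral `∫ h dγ / (γ - z)`, where
`h = f ∘ γ`. Expanding the kernel at infinity, the moment conditions make `C h` vanish on the
unbounded component of the complement; the same holds for `C 1`, which is `2πi` times the winding
number. At a point `ζ` of the curve with tangent direction `u`, compare `z` with its reflection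
`2ζ - z`: as `z → ζ` nontangentially, `C k z - C k (2ζ - z)` tends to `0` if `k` vanishes at `ζ`
(Poisson-type bound on the kernel), and to `±2πi` if `k = 1`. Hence `z` and `2ζ - z` have different
winding numbers, and since the complement has at most one bounded component, the reflection of a
point of `U` lies in the unbounded one, where both Cauchy integrals vanish. Applied to
`k = h - f ζ` this says `C h z - f ζ * C 1 z → 0`, so `φ = C h / C 1` has the required boundary
values; `C 1` is a nonzero constant on `U`.
-/

open scoped NNReal

section LipschitzFTC

variable {E : Type*} [NormedAddCommGroup E] [NormedSpace ℝ E]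

lemma integral_eq_sub_of_lipschitzOnWith [CompleteSpace E] {f f' : ℝ → E} {K : ℝ≥0} {a b : ℝ}
    (hf : LipschitzOnWith K f (uIcc a b))
    (hderiv : ∀ᵐ x, x ∈ uIcc a b → HasDerivAt f (f' x) x)
    (hint : IntervalIntegrable f' volume a b) :
    ∫ x in a..b, f' x = f b - f a := by
  refine (SeparatingDual.eq_iff_forall_dual_eq (R := ℝ)).2 fun ℓ => ?_
  have hac : AbsolutelyContinuousOnInterval (ℓ ∘ f) a b :=
    (ℓ.lipschitz.comp_lipschitzOnWith hf).absolutelyContinuousOnInterval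
  rw [← ℓ.intervalIntegral_comp_comm hint, map_sub, ← Function.comp_apply (f := ℓ) (x := b),
    ← Function.comp_apply (f := ℓ) (x := a), ← hac.integral_deriv_eq_sub]
  refine intervalIntegral.integral_congr_ae ?_
  filter_upwards [hderiv] with x hx hxm
  exact (ℓ.hasFDerivAt.comp_hasDerivAt x (hx (uIoc_subset_uIcc hxm))).deriv.symm

lemma intervalIntegrable_deriv_of_lipschitzWith [CompleteSpace E] {f : ℝ → E} {K : ℝ≥0}
    (hf : LipschitzWith K f) (a b : ℝ) : IntervalIntegrable (deriv f) volume a b :=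
  (intervalIntegrable_const (c := (K : ℝ))).mono_fun
    (stronglyMeasurable_deriv f).aestronglyMeasurable
    (Eventually.of_forall fun s => by simpa using norm_deriv_le_of_lipschitz (x₀ := s) hf)

lemma integral_deriv_of_lipschitzWith [FiniteDimensional ℝ E] {f : ℝ → E} {K : ℝ≥0}
    (hf : LipschitzWith K f) (a b : ℝ) : ∫ x in a..b, deriv f x = f b - f a :=
  haveI := FiniteDimensional.complete ℝ E
  integral_eq_sub_of_lipschitzOnWith hf.lipschitzOnWith
    (hf.ae_differentiableAt_real.mono fun _ h _ => h.hasDerivAt)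
    (intervalIntegrable_deriv_of_lipschitzWith hf a b)

lemma intervalIntegrable_mul_deriv {γ : ℝ → ℂ} {K : ℝ≥0} (hγ : LipschitzWith K γ) {g : ℝ → ℂ}
    {a b : ℝ} (hg : ContinuousOn g (uIcc a b)) :
    IntervalIntegrable (fun s => g s * deriv γ s) volume a b :=
  (intervalIntegrable_deriv_of_lipschitzWith hγ a b).continuousOn_mul hg

lemma integral_comp_mul_deriv_of_hasStrictDerivAt {γ : ℝ → ℂ} {K : ℝ≥0} (hγ : LipschitzWith K γ)
    {F F' : ℂ → ℂ} {a b : ℝ} (hF : ∀ x ∈ uIcc a b, HasStrictDerivAt F (F' (γ x)) (γ x))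
    (hF' : ContinuousOn (fun x => F' (γ x)) (uIcc a b)) :
    ∫ s in a..b, F' (γ s) * deriv γ s = F (γ b) - F (γ a) := by
  have hlocal : LocallyLipschitzOn (uIcc a b) (F ∘ γ) := fun x hx => by
    obtain ⟨C, V, hV, hFV⟩ := (hF x hx).hasStrictFDerivAt.exists_lipschitzOnWith
    exact ⟨C * K, γ ⁻¹' V, mem_nhdsWithin_of_mem_nhds (hγ.continuous.continuousAt hV),
      hFV.comp hγ.lipschitzOnWith (mapsTo_preimage γ V)⟩
  obtain ⟨C, hlip⟩ := hlocal.exists_lipschitzOnWith_of_compact isCompact_uIcc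
  refine integral_eq_sub_of_lipschitzOnWith hlip ?_ (intervalIntegrable_mul_deriv hγ hF')
  filter_upwards [hγ.ae_differentiableAt_real] with x hγx hx
  exact (hF x hx).hasDerivAt.comp x hγx.hasDerivAt

lemma norm_integral_mul_deriv_sub_le {γ : ℝ → ℂ} {K : ℝ≥0} (hγ : LipschitzWith K γ)
    {g : ℝ → ℂ} {a b : ℝ} (hab : a ≤ b) (hg : ContinuousOn g (Icc a b)) {c : ℂ} {ε : ℝ}
    (hgc : ∀ s ∈ Icc a b, ‖g s - c‖ ≤ ε) :
    ‖(∫ s in a..b, g s * deriv γ s) - c * (γ b - γ a)‖ ≤ ε * K * (b - a) := by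
  rw [← integral_deriv_of_lipschitzWith hγ, ← intervalIntegral.integral_const_mul,
    ← intervalIntegral.integral_sub (intervalIntegrable_mul_deriv hγ (uIcc_of_le hab ▸ hg))
      ((intervalIntegrable_deriv_of_lipschitzWith hγ a b).const_mul c),
    ← abs_of_nonneg (sub_nonneg.2 hab)]
  refine intervalIntegral.norm_integral_le_of_norm_le_const fun s hs => ?_
  rw [← sub_mul, norm_mul]
  have hs' : s ∈ Icc a b := Ioc_subset_Icc_self (uIoc_of_le hab ▸ hs)
  exact mul_le_mul (hgc s hs') (norm_deriv_le_of_lipschitz hγ) (norm_nonneg _)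
    ((norm_nonneg _).trans (hgc s hs'))

end LipschitzFTC

section Arclength

variable {E : Type*} [NormedAddCommGroup E]

lemma continuousOn_variationOnFromTo {δ : ℝ → E} {a b : ℝ} (hc : ContinuousOn δ (Icc a b))
    (hbv : BoundedVariationOn δ (Icc a b)) :
    ContinuousOn (variationOnFromTo δ (Icc a b) a) (Icc a b) := by
  intro x hx
  have hleft := (ENNReal.tendsto_toReal ENNReal.zero_ne_top).comp
    (hbv.tendsto_eVariationOn_Icc_zero_left (x := x) ((hc x hx).mono inter_subset_left))
  have hright := (ENNReal.tendsto_toReal ENNReal.zero_ne_top).comp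
    (hbv.tendsto_eVariationOn_Icc_zero_right x ((hc x hx).mono inter_subset_left))
  have hzero : Tendsto (variationOnFromTo δ (Icc a b) x) (𝓝[Icc a b] x) (𝓝 0) := by
    have hdegenerate : ∀ {c d : ℝ}, d ≤ c → eVariationOn δ (Icc a b ∩ Icc c d) = 0 := fun hdc =>
      eVariationOn.subsingleton _
        ((subsingleton_Icc_of_ge hdc).anti inter_subset_right)
    refine (by simpa using hright.sub hleft : Tendsto _ _ (𝓝 (0 : ℝ))).congr fun y => ?_
    rcases le_total x y with h | h
    · simp [variationOnFromTo.eq_of_le _ _ h, hdegenerate h]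
    · simp [variationOnFromTo.eq_of_ge _ _ h, hdegenerate h]
  have hadd := hzero.const_add (variationOnFromTo δ (Icc a b) a x)
  rw [add_zero] at hadd
  refine hadd.congr' (eventually_mem_nhdsWithin.mono fun y hy => ?_)
  exact variationOnFromTo.add hbv.locallyBoundedVariationOn (left_mem_Icc.2 (hx.1.trans hx.2)) hx hy

lemma lipschitzOnWith_one_of_hasUnitSpeedOn {γ : ℝ → E} {s : Set ℝ} (hγ : HasUnitSpeedOn γ s) :
    LipschitzOnWith 1 γ s := by
  have hle : ∀ x ∈ s, ∀ y ∈ s, x ≤ y → edist (γ x) (γ y) ≤ edist x y := fun x hx y hy hxy =>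
    calc edist (γ x) (γ y) ≤ eVariationOn γ (s ∩ Icc x y) :=
          eVariationOn.edist_le γ ⟨hx, left_mem_Icc.2 hxy⟩ ⟨hy, right_mem_Icc.2 hxy⟩
      _ = edist x y := by
          rw [hγ hx hy, NNReal.coe_one, one_mul, edist_dist, dist_comm, Real.dist_eq,
            abs_of_nonneg (sub_nonneg.2 hxy)]
  intro x hx y hy
  rw [ENNReal.coe_one, one_mul]
  rcases le_total x y with h | h
  · exact hle x hx y hy h
  · simpa only [edist_comm] using hle y hy x hx h

lemma eVariationOn_Icc_le_integral_norm_deriv [NormedSpace ℝ E] [FiniteDimensional ℝ E]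
    {γ : ℝ → E} {K : ℝ≥0} (hγ : LipschitzWith K γ) (a b : ℝ) :
    eVariationOn γ (Icc a b) ≤ ENNReal.ofReal (∫ s in a..b, ‖deriv γ s‖) := by
  have := FiniteDimensional.complete ℝ E
  have hint : ∀ x y, IntervalIntegrable (fun s => ‖deriv γ s‖) volume x y := fun x y =>
    (intervalIntegrable_deriv_of_lipschitzWith hγ x y).norm
  refine iSup_le ?_
  rintro ⟨n, u, hu, hmem⟩
  calc ∑ i ∈ Finset.range n, edist (γ (u (i + 1))) (γ (u i))
      ≤ ∑ i ∈ Finset.range n, ENNReal.ofReal (∫ s in u i..u (i + 1), ‖deriv γ s‖) := by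
        refine Finset.sum_le_sum fun i _ => ?_
        rw [edist_dist, dist_eq_norm, ← integral_deriv_of_lipschitzWith hγ]
        exact ENNReal.ofReal_le_ofReal
          (intervalIntegral.norm_integral_le_integral_norm (hu (Nat.le_succ i)))
    _ = ENNReal.ofReal (∫ s in u 0..u n, ‖deriv γ s‖) := by
        rw [← ENNReal.ofReal_sum_of_nonneg fun i _ => intervalIntegral.integral_nonneg
          (hu (Nat.le_succ i)) fun _ _ => norm_nonneg _,
          intervalIntegral.sum_integral_adjacent_intervals fun _ _ => hint _ _]
    _ ≤ ENNReal.ofReal (∫ s in a..b, ‖deriv γ s‖) :=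
        ENNReal.ofReal_le_ofReal (intervalIntegral.integral_mono_interval (hmem 0).1
          (hu (Nat.zero_le n)) (hmem n).2 (Eventually.of_forall fun _ => norm_nonneg _)
          (hint _ _))

lemma ae_norm_deriv_eq_one_of_hasUnitSpeedOn [NormedSpace ℝ E] [FiniteDimensional ℝ E]
    {γ : ℝ → E} (hγ : LipschitzWith 1 γ) {a b : ℝ} (hab : a ≤ b)
    (hspeed : HasUnitSpeedOn γ (Icc a b)) : ∀ᵐ s, s ∈ Icc a b → ‖deriv γ s‖ = 1 := by
  have := FiniteDimensional.complete ℝ E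
  have hnonneg : ∀ s, 0 ≤ 1 - ‖deriv γ s‖ := fun s =>
    sub_nonneg.2 (by simpa using norm_deriv_le_of_lipschitz (x₀ := s) hγ)
  have hint : IntervalIntegrable (fun s => 1 - ‖deriv γ s‖) volume a b :=
    intervalIntegrable_const.sub (intervalIntegrable_deriv_of_lipschitzWith hγ a b).norm
  have hlength : b - a ≤ ∫ s in a..b, ‖deriv γ s‖ := by
    have hvar := hspeed (left_mem_Icc.2 hab) (right_mem_Icc.2 hab)
    have hle := eVariationOn_Icc_le_integral_norm_deriv hγ a b
    rw [inter_self] at hvar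
    rwa [hvar, NNReal.coe_one, one_mul, ENNReal.ofReal_le_ofReal_iff
      (intervalIntegral.integral_nonneg hab fun _ _ => norm_nonneg _)] at hle
  have hzero : ∫ s in a..b, (1 - ‖deriv γ s‖) = 0 := by
    refine le_antisymm ?_ (intervalIntegral.integral_nonneg hab fun s _ => hnonneg s)
    rw [intervalIntegral.integral_sub intervalIntegrable_const
      (intervalIntegrable_deriv_of_lipschitzWith hγ a b).norm]
    simpa using hlength
  rw [intervalIntegral.integral_eq_zero_iff_of_le_of_nonneg_ae hab
    (Eventually.of_forall hnonneg) hint, restrict_Ioc_eq_restrict_Icc] at hzero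
  filter_upwards [(ae_restrict_iff' measurableSet_Icc).1 hzero] with s hs hmem
  exact (sub_eq_zero.1 (hs hmem)).symm

end Arclength

/-- A Jordan curve `γ : [a, b] → ℂ`: continuous, closed, and injective on `[a, b)`. It is given by a
function on `ℝ` of which only the values on `[a, b]` matter. -/
structure IsJordanCurve (γ : ℝ → ℂ) (a b : ℝ) : Prop where
  lt : a < b
  continuousOn : ContinuousOn γ (Icc a b)
  closed : γ a = γ b
  injOn : InjOn γ (Ico a b)

lemma IsRectifiableJordanCurve.isJordanCurve {δ : ℝ → ℂ} {a b : ℝ}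
    (hδ : IsRectifiableJordanCurve δ a b) : IsJordanCurve δ a b :=
  ⟨hδ.1, hδ.2.1, hδ.2.2.2.1, hδ.2.2.2.2⟩

lemma IsRectifiableJordanCurve.boundedVariationOn {δ : ℝ → ℂ} {a b : ℝ}
    (hδ : IsRectifiableJordanCurve δ a b) : BoundedVariationOn δ (Icc a b) :=
  hδ.2.2.1

/-- `γ` on `[v a, v b]` and `δ` on `[a, b]` are the same curve up to the continuous monotone change
of parameter `v`, which need not be injective. -/
structure IsReparametrization (v : ℝ → ℝ) (γ δ : ℝ → ℂ) (a b : ℝ) : Prop where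
  continuousOn : ContinuousOn v (Icc a b)
  monotoneOn : MonotoneOn v (Icc a b)
  eqOn : ∀ t ∈ Icc a b, γ (v t) = δ t

namespace IsReparametrization

variable {v : ℝ → ℝ} {γ δ : ℝ → ℂ} {a b : ℝ}

lemma image_parameter (h : IsReparametrization v γ δ a b) (hab : a ≤ b) :
    v '' Icc a b = Icc (v a) (v b) :=
  h.continuousOn.image_Icc_of_monotoneOn hab h.monotoneOn

lemma image_eq (h : IsReparametrization v γ δ a b) (hab : a ≤ b) :
    γ '' Icc (v a) (v b) = δ '' Icc a b := by
  rw [← h.image_parameter hab, image_image]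
  exact image_congr h.eqOn

lemma mono (h : IsReparametrization v γ δ a b) {c d : ℝ} (hsub : Icc c d ⊆ Icc a b) :
    IsReparametrization v γ δ c d :=
  ⟨h.continuousOn.mono hsub, h.monotoneOn.mono hsub, fun t ht => h.eqOn t (hsub ht)⟩

lemma isJordanCurve (h : IsReparametrization v γ δ a b) (hδ : IsJordanCurve δ a b)
    (hγ : ContinuousOn γ (Icc (v a) (v b))) : IsJordanCurve γ (v a) (v b) where
  lt := by
    have ha := left_mem_Icc.2 hδ.lt.le
    have hb := right_mem_Icc.2 hδ.lt.le
    refine (h.monotoneOn ha hb hδ.lt.le).lt_of_ne fun heq => ?_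
    obtain ⟨c, hac, hcb⟩ := exists_between hδ.lt
    have hc : c ∈ Icc a b := ⟨hac.le, hcb.le⟩
    have hvc : v c = v a :=
      le_antisymm (heq ▸ h.monotoneOn hc hb hcb.le) (h.monotoneOn ha hc hac.le)
    refine hac.ne (hδ.injOn ⟨le_rfl, hδ.lt⟩ ⟨hac.le, hcb⟩ ?_)
    rw [← h.eqOn a ha, ← h.eqOn c hc, hvc]
  continuousOn := hγ
  closed := by
    rw [h.eqOn a (left_mem_Icc.2 hδ.lt.le), h.eqOn b (right_mem_Icc.2 hδ.lt.le), hδ.closed]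
  injOn := by
    have hlift : ∀ x ∈ Ico (v a) (v b), ∃ t ∈ Ico a b, v t = x := fun x hx => by
      obtain ⟨t, ht, rfl⟩ : x ∈ v '' Icc a b :=
        h.image_parameter hδ.lt.le ▸ Ico_subset_Icc_self hx
      exact ⟨t, ⟨ht.1, ht.2.lt_of_ne fun htb => hx.2.ne (htb ▸ rfl)⟩, rfl⟩
    intro x hx y hy hxy
    obtain ⟨t, ht, rfl⟩ := hlift x hx
    obtain ⟨r, hr, rfl⟩ := hlift y hy
    rw [h.eqOn t (Ico_subset_Icc_self ht), h.eqOn r (Ico_subset_Icc_self hr)] at hxy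
    rw [hδ.injOn ht hr hxy]

end IsReparametrization

lemma exists_arclength_reparametrization {δ : ℝ → ℂ} {a b : ℝ} (hab : a ≤ b)
    (hc : ContinuousOn δ (Icc a b)) (hbv : BoundedVariationOn δ (Icc a b)) :
    ∃ (γ : ℝ → ℂ) (v : ℝ → ℝ), LipschitzWith 1 γ ∧ IsReparametrization v γ δ a b ∧
      ∀ᵐ s, s ∈ Icc (v a) (v b) → ‖deriv γ s‖ = 1 := by
  have ha : a ∈ Icc a b := left_mem_Icc.2 hab
  have hlbv := hbv.locallyBoundedVariationOn
  let v := variationOnFromTo δ (Icc a b) a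
  let γ₀ := naturalParameterization δ (Icc a b) a
  have hv : IsReparametrization v γ₀ δ a b :=
    ⟨continuousOn_variationOnFromTo hc hbv, variationOnFromTo.monotoneOn hlbv ha,
      fun t ht => edist_eq_zero.1 (edist_naturalParameterization_eq_zero hlbv ha ht)⟩
  have hle : v a ≤ v b := hv.monotoneOn ha (right_mem_Icc.2 hab) hab
  have hspeed₀ : HasUnitSpeedOn γ₀ (Icc (v a) (v b)) :=
    hv.image_parameter hab ▸ has_unit_speed_naturalParameterization δ hlbv ha
  let γ : ℝ → ℂ := IccExtend hle ((Icc (v a) (v b)).domRestrict γ₀)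
  have hγ : EqOn γ γ₀ (Icc (v a) (v b)) := fun s hs => IccExtend_of_mem hle _ hs
  have hlip : LipschitzWith 1 γ := by
    have hcomp := (lipschitzOnWith_one_of_hasUnitSpeedOn hspeed₀).to_restrict.comp
      (LipschitzWith.projIcc hle)
    rwa [one_mul] at hcomp
  have hspeed : HasUnitSpeedOn γ (Icc (v a) (v b)) := fun x hx y hy => by
    rw [eVariationOn.congr (hγ.mono inter_subset_left), hspeed₀ hx hy]
  refine ⟨γ, v, hlip, ⟨hv.continuousOn, hv.monotoneOn, fun t ht => ?_⟩,
    ae_norm_deriv_eq_one_of_hasUnitSpeedOn hlip hle hspeed⟩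
  rw [hγ (hv.image_parameter hab ▸ mem_image_of_mem v ht), hv.eqOn t ht]

section RiemannStieltjes

variable {v : ℝ → ℝ} {γ δ : ℝ → ℂ} {a b : ℝ}

lemma exists_monotone_partition_lt (hab : a ≤ b) {d : ℝ} (hd : 0 < d) :
    ∃ (n : ℕ) (t : ℕ → ℝ), Monotone t ∧ t 0 = a ∧ t n = b ∧ ∀ i, t (i + 1) - t i < d := by
  obtain ⟨n, hn⟩ := exists_nat_gt ((b - a) / d)
  have hn₀ : (0 : ℝ) < n := (div_nonneg (sub_nonneg.2 hab) hd.le).trans_lt hn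
  refine ⟨n, fun i => a + i * ((b - a) / n), fun i j hij => ?_, by simp, by field_simp; ring,
    fun i => ?_⟩
  · have : (i : ℝ) ≤ j := mod_cast hij
    have : 0 ≤ (b - a) / n := div_nonneg (sub_nonneg.2 hab) hn₀.le
    dsimp only
    gcongr
  · have hstep : (b - a) / n < d := by rwa [div_lt_iff₀ hn₀, ← div_lt_iff₀' hd]
    push_cast
    linarith

lemma IsReparametrization.norm_integral_sub_sum_le (h : IsReparametrization v γ δ a b) {K : ℝ≥0}
    (hγ : LipschitzWith K γ) (hab : a ≤ b) {g : ℂ → ℂ} (hg : ContinuousOn g (δ '' Icc a b))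
    {n : ℕ} {t : ℕ → ℝ} (ht : Monotone t) (ht₀ : t 0 = a) (htn : t n = b) {ε : ℝ}
    (hosc : ∀ i < n, ∀ r ∈ Icc (t i) (t (i + 1)), ‖g (δ r) - g (δ (t i))‖ ≤ ε) :
    ‖(∫ s in v a..v b, g (γ s) * deriv γ s) -
      ∑ i ∈ Finset.range n, g (δ (t i)) * (δ (t (i + 1)) - δ (t i))‖ ≤ ε * K * (v b - v a) := by
  have hgγ : ContinuousOn (fun s => g (γ s)) (Icc (v a) (v b)) :=
    hg.comp hγ.continuous.continuousOn fun s hs => h.image_eq hab ▸ mem_image_of_mem γ hs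
  have hmem : ∀ i ≤ n, t i ∈ Icc a b := fun i hi => ⟨ht₀ ▸ ht (Nat.zero_le i), htn ▸ ht hi⟩
  have hpiece : ∀ i < n, Icc (t i) (t (i + 1)) ⊆ Icc a b := fun i hi =>
    Icc_subset_Icc (hmem i hi.le).1 (hmem (i + 1) hi).2
  have hle : ∀ i < n, v (t i) ≤ v (t (i + 1)) := fun i hi =>
    h.monotoneOn (hmem i hi.le) (hmem (i + 1) hi) (ht (Nat.le_succ i))
  have hcont : ∀ i < n, ContinuousOn (fun s => g (γ s)) (Icc (v (t i)) (v (t (i + 1)))) :=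
    fun i hi => hgγ.mono <| by
      rw [← h.image_parameter hab, ← (h.mono (hpiece i hi)).image_parameter (ht (Nat.le_succ i))]
      exact image_mono (hpiece i hi)
  have hsum := intervalIntegral.sum_integral_adjacent_intervals (a := v ∘ t) fun i hi =>
    intervalIntegrable_mul_deriv hγ (uIcc_of_le (hle i hi) ▸ hcont i hi)
  simp only [Function.comp_apply, ht₀, htn] at hsum
  rw [← hsum, ← Finset.sum_sub_distrib]
  calc _ ≤ ∑ i ∈ Finset.range n, ε * K * (v (t (i + 1)) - v (t i)) := by
        refine norm_sum_le_of_le _ fun i hi => ?_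
        have hi' : i < n := Finset.mem_range.1 hi
        rw [← h.eqOn _ (hmem (i + 1) hi'), ← h.eqOn _ (hmem i hi'.le)]
        refine norm_integral_mul_deriv_sub_le hγ (hle i hi') (hcont i hi') ?_
        rw [← (h.mono (hpiece i hi')).image_parameter (ht (Nat.le_succ i))]
        rintro _ ⟨r, hr, rfl⟩
        rw [h.eqOn r (hpiece i hi' hr), h.eqOn _ (hmem i hi'.le)]
        exact hosc i hi' r hr
    _ = ε * K * (v b - v a) := by
        rw [← Finset.mul_sum, Finset.sum_range_sub (fun i => v (t i)), htn, ht₀]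

lemma IsRSIntegral.exists_norm_sum_sub_lt {g : ℂ → ℂ} {I : ℂ} (hI : IsRSIntegral g δ a b I)
    {ε : ℝ} (hε : 0 < ε) :
    ∃ d > 0, ∀ (n : ℕ) (t : ℕ → ℝ), Monotone t → t 0 = a → t n = b →
      (∀ i, t (i + 1) - t i < d) →
      ‖(∑ i ∈ Finset.range n, g (δ (t i)) * (δ (t (i + 1)) - δ (t i))) - I‖ < ε := by
  obtain ⟨d, hd, h⟩ := hI ε hε
  refine ⟨d, hd, fun n t ht ht₀ htn hmesh => ?_⟩
  rw [← Fin.sum_univ_eq_sum_range fun i => g (δ (t i)) * (δ (t (i + 1)) - δ (t i))]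
  exact h n (fun i => t i) (fun i => t i) (fun i j hij => ht hij) ht₀ htn
    (fun i => ⟨le_rfl, ht (Nat.le_succ i)⟩) fun i => hmesh i

lemma IsRSIntegral.integral_eq {g : ℂ → ℂ} {I : ℂ} (hI : IsRSIntegral g δ a b I)
    (h : IsReparametrization v γ δ a b) {K : ℝ≥0} (hγ : LipschitzWith K γ) (hab : a ≤ b)
    (hδ : ContinuousOn δ (Icc a b)) (hg : ContinuousOn g (δ '' Icc a b)) :
    ∫ s in v a..v b, g (γ s) * deriv γ s = I := by
  have huc := Metric.uniformContinuousOn_iff.1 <|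
    isCompact_Icc.uniformContinuousOn_of_continuous (hg.comp hδ (mapsTo_image δ _))
  have hclose : ∀ ε > 0, ‖(∫ s in v a..v b, g (γ s) * deriv γ s) - I‖ ≤
      ε * K * (v b - v a) + ε := fun ε hε => by
    obtain ⟨d₁, hd₁, hosc⟩ := huc ε hε
    obtain ⟨d₂, hd₂, hsum⟩ := hI.exists_norm_sum_sub_lt hε
    obtain ⟨n, t, ht, ht₀, htn, hmesh⟩ := exists_monotone_partition_lt hab (lt_min hd₁ hd₂)
    refine (norm_sub_le_norm_sub_add_norm_sub _ _ _).trans (add_le_add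
      (h.norm_integral_sub_sum_le hγ hab hg ht ht₀ htn fun i hi r hr => ?_)
      (hsum n t ht ht₀ htn fun i => (hmesh i).trans_le (min_le_right _ _)).le)
    have hi₀ : a ≤ t i := ht₀ ▸ ht (Nat.zero_le i)
    have hi₁ : t (i + 1) ≤ b := htn ▸ ht (Nat.succ_le_of_lt hi)
    refine ((dist_eq_norm _ _).symm.trans_lt (hosc r ⟨hi₀.trans hr.1, hr.2.trans hi₁⟩ (t i)
      ⟨hi₀, (ht (Nat.le_succ i)).trans hi₁⟩ ?_)).le
    rw [Real.dist_eq, abs_of_nonneg (sub_nonneg.2 hr.1)]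
    exact (sub_le_sub_right hr.2 _).trans_lt ((hmesh i).trans_le (min_le_left _ _))
  have hlim : Tendsto (fun ε => ε * K * (v b - v a) + ε) (𝓝[>] 0) (𝓝 0) :=
    tendsto_nhdsWithin_of_tendsto_nhds (Continuous.tendsto' (by fun_prop) 0 0 (by simp))
  exact sub_eq_zero.1 (norm_le_zero_iff.1
    (ge_of_tendsto hlim (eventually_mem_nhdsWithin.mono hclose)))

end RiemannStieltjes

section PlaneTopology

lemma eq_of_continuous_of_exp_eq_const {X : Type*} [TopologicalSpace X] [PreconnectedSpace X]
    {f : X → ℂ} (hf : Continuous f) {c : ℂ} (hc : ∀ x, Complex.exp (f x) = c) (x y : X) :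
    f x = f y := by
  have hcountable : (range fun n : ℤ => f y + n * (2 * Real.pi * Complex.I)).Countable :=
    countable_range _
  refine hcountable.isTotallyDisconnected _ ?_ (isPreconnected_range hf) ⟨x, rfl⟩ ⟨y, rfl⟩
  rintro _ ⟨z, rfl⟩
  obtain ⟨n, hn⟩ := Complex.exp_eq_exp_iff_exists_int.1 ((hc z).trans (hc y).symm)
  exact ⟨n, hn.symm⟩

lemma exists_continuous_exp_eq {X : Type*} [TopologicalSpace X] [SimplyConnectedSpace X]
    [LocallyPathConnectedSpace X] {g : X → ℂ} (hg : Continuous g) (hg₀ : ∀ x, g x ≠ 0) :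
    ∃ ℓ : X → ℂ, Continuous ℓ ∧ ∀ x, Complex.exp (ℓ x) = g x := by
  obtain ⟨x₀⟩ : Nonempty X := inferInstance
  obtain ⟨ℓ, ⟨-, hℓ⟩, -⟩ := Complex.isCoveringMapOn_exp.existsUnique_continuousMap_lifts
    ⟨g, hg⟩ (a₀ := x₀) (Complex.exp_log (hg₀ x₀)) hg₀
  exact ⟨ℓ, ℓ.continuous, congrFun hℓ⟩

lemma exists_continuousOn_Icc_exp_eq {g : ℝ → ℂ} {a b : ℝ} (hab : a ≤ b)
    (hg : ContinuousOn g (Icc a b)) (hg₀ : ∀ s ∈ Icc a b, g s ≠ 0) :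
    ∃ ℓ : ℝ → ℂ, ContinuousOn ℓ (Icc a b) ∧ ∀ s ∈ Icc a b, Complex.exp (ℓ s) = g s := by
  obtain ⟨ℓ, hℓ, hexp⟩ := exists_continuous_exp_eq (g := IccExtend hab ((Icc a b).domRestrict g))
    hg.domRestrict.Icc_extend' fun s => hg₀ _ (projIcc a b hab s).2
  exact ⟨ℓ, hℓ.continuousOn, fun s hs => by rw [hexp, IccExtend_of_mem hab _ hs]; rfl⟩

-- Outside `W` we continue `f` by `(z - z₁) ^ p`; the result has a global logarithm, but around a
-- large circle the logarithm of `(z - z₁) ^ p` increases by `2πip`.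
lemma eq_zero_of_eqOn_frontier_zpow {W : Set ℂ} (hWo : IsOpen W) (hWb : Bornology.IsBounded W)
    {z₁ : ℂ} (hz₁ : z₁ ∈ W) {f : ℂ → ℂ} (hf : ContinuousOn f (closure W))
    (hf₀ : ∀ z ∈ closure W, f z ≠ 0) {p : ℤ} (hfr : ∀ z ∈ frontier W, f z = (z - z₁) ^ p) :
    p = 0 := by
  classical
  have hne : ∀ z ∉ W, z - z₁ ≠ 0 := fun z hz h => hz (sub_eq_zero.1 h ▸ hz₁)
  let G : ℂ → ℂ := fun z => if z ∈ W then f z else (z - z₁) ^ p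
  have hG : Continuous G := by
    refine continuous_if hfr hf ?_
    rw [← compl_def, hWo.isClosed_compl.closure_eq]
    exact ContinuousOn.zpow₀ (by fun_prop) p fun z hz => Or.inl (hne z hz)
  have hG₀ : ∀ z, G z ≠ 0 := fun z => by
    by_cases hz : z ∈ W
    · simpa only [G, if_pos hz] using hf₀ z (subset_closure hz)
    · simpa only [G, if_neg hz] using zpow_ne_zero p (hne z hz)
  obtain ⟨Λ, hΛ, hexp⟩ := exists_continuous_exp_eq hG hG₀
  obtain ⟨R, hR₀, hR⟩ := hWb.subset_ball_lt 0 z₁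
  let c : ℝ → ℂ := fun θ => z₁ + R * Complex.exp (θ * Complex.I)
  have hcW : ∀ θ, c θ ∉ W := fun θ h => by
    simpa [c, Complex.norm_exp, abs_of_pos hR₀] using hR h
  have hconst := eq_of_continuous_of_exp_eq_const (c := (R : ℂ) ^ p)
    (f := fun θ : ℝ => Λ (c θ) - p * (θ * Complex.I)) (by fun_prop)
    (fun θ => by
      rw [Complex.exp_sub, hexp, Complex.exp_int_mul, div_eq_iff (zpow_ne_zero _
        (Complex.exp_ne_zero _)), ← mul_zpow]
      simp only [G, if_neg (hcW θ), c, add_sub_cancel_left]) 0 (2 * Real.pi)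
  have hperiod : c (2 * Real.pi) = c 0 := by simp [c, Complex.exp_two_pi_mul_I]
  have hzero : (p : ℂ) * (2 * Real.pi * Complex.I) = 0 := by
    push_cast [hperiod] at hconst
    linear_combination hconst
  exact Int.cast_eq_zero.1 ((mul_eq_zero.1 hzero).resolve_right Complex.two_pi_I_ne_zero)

lemma eq_zero_of_exp_eqOn_zpow_mul_zpow {J W : Set ℂ} (hJ : IsClosed J) (hWo : IsOpen W)
    (hWb : Bornology.IsBounded W) (hWJ : frontier W ⊆ J) {z₁ z₂ : ℂ} (hz₁ : z₁ ∈ W)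
    (hz₂ : z₂ ∉ W) (hz₂J : z₂ ∉ J) {p q : ℤ} {h : ℂ → ℂ} (hh : ContinuousOn h J)
    (hexp : ∀ z ∈ J, Complex.exp (h z) = (z - z₁) ^ p * (z - z₂) ^ q) : p = 0 := by
  obtain ⟨H, hH⟩ := ContinuousMap.exists_restrict_eq hJ
    (⟨J.domRestrict h, hh.domRestrict⟩ : C(J, ℂ))
  have hHJ : ∀ z ∈ J, H z = h z := fun z hz => congrArg (fun k : C(J, ℂ) => k ⟨z, hz⟩) hH
  have hne : ∀ z ∈ closure W, z - z₂ ≠ 0 := fun z hz hzz₂ => by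
    obtain rfl := sub_eq_zero.1 hzz₂
    exact hz₂J (hWJ ⟨hz, fun hint => hz₂ (interior_subset hint)⟩)
  refine eq_zero_of_eqOn_frontier_zpow hWo hWb hz₁ (p := p)
    (f := fun z => Complex.exp (H z) * (z - z₂) ^ (-q)) ?_ ?_ ?_
  · exact ContinuousOn.mul (by fun_prop)
      (ContinuousOn.zpow₀ (by fun_prop) _ fun z hz => Or.inl (hne z hz))
  · exact fun z hz => mul_ne_zero (Complex.exp_ne_zero _) (zpow_ne_zero _ (hne z hz))
  · intro z hz
    simp only [hHJ z (hWJ hz), hexp z (hWJ hz), zpow_neg,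
      mul_inv_cancel_right₀ (zpow_ne_zero q (hne z (frontier_subset_closure hz)))]

lemma frontier_connectedComponentIn_compl_subset {J : Set ℂ} (hJ : IsClosed J) (x : ℂ) :
    frontier (connectedComponentIn Jᶜ x) ⊆ J := by
  rintro z ⟨hcl, hint⟩
  by_contra hzJ
  have hopen : ∀ w, IsOpen (connectedComponentIn Jᶜ w) := fun w =>
    hJ.isOpen_compl.connectedComponentIn
  obtain ⟨y, hyz, hyx⟩ := mem_closure_iff.1 hcl _ (hopen z) (mem_connectedComponentIn hzJ)
  have heq : connectedComponentIn Jᶜ x = connectedComponentIn Jᶜ z :=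
    (connectedComponentIn_eq hyx).trans (connectedComponentIn_eq hyz).symm
  exact hint ((hopen x).interior_eq.symm ▸ heq ▸ mem_connectedComponentIn hzJ)

namespace IsJordanCurve

variable {γ : ℝ → ℂ} {a b : ℝ}

lemma isClosed_image (hγ : IsJordanCurve γ a b) : IsClosed (γ '' Icc a b) :=
  (isCompact_Icc.image_of_continuousOn hγ.continuousOn).isClosed

lemma eq_of_apply_eq {Y : Type*} (hγ : IsJordanCurve γ a b) {k : ℝ → Y} (hk : k a = k b)
    {s t : ℝ} (hs : s ∈ Icc a b) (ht : t ∈ Icc a b) (hst : γ s = γ t) : k s = k t := by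
  rcases hs.2.eq_or_lt with rfl | hsb <;> rcases ht.2.eq_or_lt with rfl | htb
  · rfl
  · rw [← hk, hγ.injOn ⟨le_rfl, hγ.lt⟩ ⟨ht.1, htb⟩ (hγ.closed.trans hst)]
  · rw [← hk, hγ.injOn ⟨hs.1, hsb⟩ ⟨le_rfl, hγ.lt⟩ (hst.trans hγ.closed.symm)]
  · rw [hγ.injOn ⟨hs.1, hsb⟩ ⟨ht.1, htb⟩ hst]

lemma exists_continuousOn_image_comp_eq {Y : Type*} [TopologicalSpace Y]
    (hγ : IsJordanCurve γ a b) {k : ℝ → Y} (hk : ContinuousOn k (Icc a b)) (hkab : k a = k b) :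
    ∃ h : ℂ → Y, ContinuousOn h (γ '' Icc a b) ∧ ∀ s ∈ Icc a b, h (γ s) = k s := by
  let h : ℂ → Y := fun z => k (Function.invFunOn γ (Icc a b) z)
  have hval : ∀ s ∈ Icc a b, h (γ s) = k s := fun s hs =>
    hγ.eq_of_apply_eq hkab (Function.invFunOn_mem ⟨s, hs, rfl⟩) hs
      (Function.invFunOn_eq ⟨s, hs, rfl⟩)
  refine ⟨h, ?_, hval⟩
  rw [continuousOn_iff_continuous_domRestrict]
  let Γ : Icc a b → γ '' Icc a b := fun s => ⟨γ s, mem_image_of_mem γ s.2⟩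
  have hΓ : Continuous Γ := hγ.continuousOn.domRestrict.subtype_mk _
  have hsurj : Function.Surjective Γ := by
    rintro ⟨_, s, hs, rfl⟩
    exact ⟨⟨s, hs⟩, rfl⟩
  rw [(hΓ.isClosedMap.isQuotientMap hΓ hsurj).continuous_iff]
  exact hk.domRestrict.congr fun s => (hval s s.2).symm

lemma exists_log (hγ : IsJordanCurve γ a b) {z : ℂ} (hz : z ∉ γ '' Icc a b) :
    ∃ ℓ : ℝ → ℂ, ContinuousOn ℓ (Icc a b) ∧ (∀ s ∈ Icc a b, Complex.exp (ℓ s) = γ s - z) ∧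
      ∃ n : ℤ, ℓ b = ℓ a + n * (2 * Real.pi * Complex.I) := by
  obtain ⟨ℓ, hℓ, hexp⟩ := exists_continuousOn_Icc_exp_eq hγ.lt.le
    (hγ.continuousOn.sub (continuousOn_const (c := z)))
    fun s hs h => hz ⟨s, hs, sub_eq_zero.1 h⟩
  refine ⟨ℓ, hℓ, hexp, Complex.exp_eq_exp_iff_exists_int.1 ?_⟩
  rw [hexp b (right_mem_Icc.2 hγ.lt.le), hexp a (left_mem_Icc.2 hγ.lt.le)]
  simp only [Pi.sub_apply, hγ.closed]

-- With `nᵢ` the winding number about `zᵢ`, the function `(z - z₁) ^ n₂ / (z - z₂) ^ n₁` has a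
-- logarithm on the curve, which forces `n₂ = 0`; then so does `z - z₂`, which is absurd.
lemma connectedComponentIn_eq_of_isBounded (hγ : IsJordanCurve γ a b) {z₁ z₂ : ℂ}
    (hz₁ : z₁ ∉ γ '' Icc a b) (hz₂ : z₂ ∉ γ '' Icc a b)
    (hb₁ : Bornology.IsBounded (connectedComponentIn (γ '' Icc a b)ᶜ z₁))
    (hb₂ : Bornology.IsBounded (connectedComponentIn (γ '' Icc a b)ᶜ z₂)) :
    connectedComponentIn (γ '' Icc a b)ᶜ z₁ = connectedComponentIn (γ '' Icc a b)ᶜ z₂ := by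
  by_contra hne
  have hJ := hγ.isClosed_image
  have h₁₂ : z₁ ∉ connectedComponentIn (γ '' Icc a b)ᶜ z₂ := fun h =>
    hne (connectedComponentIn_eq h).symm
  have h₂₁ : z₂ ∉ connectedComponentIn (γ '' Icc a b)ᶜ z₁ := fun h =>
    hne (connectedComponentIn_eq h)
  obtain ⟨ℓ₁, hℓ₁, hexp₁, n₁, hn₁⟩ := hγ.exists_log hz₁
  obtain ⟨ℓ₂, hℓ₂, hexp₂, n₂, hn₂⟩ := hγ.exists_log hz₂
  have hn₂_zero : n₂ = 0 := by
    obtain ⟨h, hh, hval⟩ := hγ.exists_continuousOn_image_comp_eq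
      (k := fun s => n₂ * ℓ₁ s + (-n₁ : ℤ) * ℓ₂ s) (by fun_prop)
      (by simp only [hn₁, hn₂]; push_cast; ring)
    refine eq_zero_of_exp_eqOn_zpow_mul_zpow hJ hJ.isOpen_compl.connectedComponentIn hb₁
      (frontier_connectedComponentIn_compl_subset hJ z₁) (mem_connectedComponentIn hz₁) h₂₁ hz₂
      (q := -n₁) hh ?_
    rintro _ ⟨s, hs, rfl⟩
    rw [hval s hs, Complex.exp_add, Complex.exp_int_mul, Complex.exp_int_mul, hexp₁ s hs,
      hexp₂ s hs]
  obtain ⟨h, hh, hval⟩ := hγ.exists_continuousOn_image_comp_eq hℓ₂ (by simp [hn₂, hn₂_zero])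
  refine one_ne_zero (α := ℤ) (eq_zero_of_exp_eqOn_zpow_mul_zpow hJ
    hJ.isOpen_compl.connectedComponentIn hb₂ (frontier_connectedComponentIn_compl_subset hJ z₂)
    (mem_connectedComponentIn hz₂) h₁₂ hz₁ (q := 0) hh ?_)
  rintro _ ⟨s, hs, rfl⟩
  rw [hval s hs, hexp₂ s hs, zpow_one, zpow_zero, mul_one]

end IsJordanCurve

end PlaneTopology

section CauchyIntegral

/-- The Cauchy-type integral of the density `h` along `γ` over `[a, b]`, without the customary
factor `1 / (2πi)`. The density is a function of the parameter, not of the point on the curve. -/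
noncomputable def cauchyIntegral (γ : ℝ → ℂ) (a b : ℝ) (h : ℝ → ℂ) (z : ℂ) : ℂ :=
  ∫ s in a..b, h s / (γ s - z) * deriv γ s

/-- The density `h` is orthogonal to all powers of `z` along `γ`; this is what makes its Cauchy
integral vanish near infinity. -/
def HasVanishingMoments (γ : ℝ → ℂ) (a b : ℝ) (h : ℝ → ℂ) : Prop :=
  ∀ k : ℕ, ∫ s in a..b, γ s ^ k * h s * deriv γ s = 0

variable {γ h : ℝ → ℂ} {a b : ℝ} {K : ℝ≥0} {z : ℂ}

lemma continuousOn_div_sub_pow {S : Set ℝ} (hγ : ContinuousOn γ S) (hh : ContinuousOn h S)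
    (hz : z ∉ γ '' S) (n : ℕ) : ContinuousOn (fun s => h s / (γ s - z) ^ n) S :=
  hh.div ((hγ.sub continuousOn_const).pow n) fun s hs h₀ =>
    hz ⟨s, hs, sub_eq_zero.1 (eq_zero_of_pow_eq_zero h₀)⟩

lemma intervalIntegrable_div_sub_pow_mul_deriv (hγ : LipschitzWith K γ)
    (hh : ContinuousOn h (uIcc a b)) (hz : z ∉ γ '' uIcc a b) (n : ℕ) :
    IntervalIntegrable (fun s => h s / (γ s - z) ^ n * deriv γ s) volume a b :=
  intervalIntegrable_mul_deriv hγ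
    (continuousOn_div_sub_pow hγ.continuous.continuousOn hh hz n)

lemma intervalIntegrable_cauchyKernel (hγ : LipschitzWith K γ)
    (hh : ContinuousOn h (uIcc a b)) (hz : z ∉ γ '' uIcc a b) :
    IntervalIntegrable (fun s => h s / (γ s - z) * deriv γ s) volume a b := by
  simpa only [pow_one] using intervalIntegrable_div_sub_pow_mul_deriv hγ hh hz 1

lemma exists_ball_forall_le_norm_sub {S : Set ℂ} (hS : IsClosed S) (hz : z ∉ S) :
    ∃ r > 0, ∀ w ∈ Metric.ball z r, ∀ x ∈ S, r ≤ ‖x - w‖ := by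
  obtain ⟨r, hr, hball⟩ := Metric.isOpen_iff.1 hS.isOpen_compl z hz
  refine ⟨r / 2, half_pos hr, fun w hw x hx => ?_⟩
  have hxz : r ≤ dist x z := not_lt.1 fun hlt => hball hlt hx
  rw [← dist_eq_norm]
  linarith [dist_triangle x w z, Metric.mem_ball.1 hw]

lemma hasDerivAt_cauchyKernel {x : ℂ} (hxz : x ≠ z) (c d : ℂ) :
    HasDerivAt (fun w => c / (x - w) * d) (c / (x - z) ^ 2 * d) z := by
  have hinv := ((hasDerivAt_id z).const_sub x).inv (sub_ne_zero.2 hxz)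
  simpa [div_eq_mul_inv] using (hinv.const_mul c).mul_const d

lemma hasDerivAt_cauchyIntegral (hγ : LipschitzWith K γ) (hh : ContinuousOn h (uIcc a b))
    (hz : z ∉ γ '' uIcc a b) :
    HasDerivAt (cauchyIntegral γ a b h) (∫ s in a..b, h s / (γ s - z) ^ 2 * deriv γ s) z := by
  obtain ⟨r, hr, hdist⟩ := exists_ball_forall_le_norm_sub
    (isCompact_uIcc.image hγ.continuous).isClosed hz
  obtain ⟨B, hB⟩ := isCompact_uIcc.exists_bound_of_continuousOn hh
  have hball : ∀ w ∈ Metric.ball z r, w ∉ γ '' uIcc a b := fun w hw hwγ => by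
    simpa [hr.not_ge] using hdist w hw w hwγ
  refine (intervalIntegral.hasDerivAt_integral_of_dominated_loc_of_deriv_le
    (F := fun w s => h s / (γ s - w) * deriv γ s)
    (F' := fun w s => h s / (γ s - w) ^ 2 * deriv γ s) (bound := fun _ => B / r ^ 2 * K)
    (Metric.ball_mem_nhds z hr) ?_ (intervalIntegrable_cauchyKernel hγ hh hz)
    (intervalIntegrable_div_sub_pow_mul_deriv hγ hh hz 2).def'.aestronglyMeasurable ?_
    intervalIntegrable_const ?_).2
  · filter_upwards [Metric.ball_mem_nhds z hr] with w hw
    exact (intervalIntegrable_cauchyKernel hγ hh (hball w hw)).def'.aestronglyMeasurable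
  · refine Eventually.of_forall fun s hs w hw => ?_
    have hs' := uIoc_subset_uIcc hs
    have hB₀ : 0 ≤ B := (norm_nonneg _).trans (hB s hs')
    rw [norm_mul, norm_div, norm_pow]
    gcongr
    · exact hB s hs'
    · exact hdist w hw _ (mem_image_of_mem γ hs')
    · exact norm_deriv_le_of_lipschitz hγ
  · exact Eventually.of_forall fun s hs w hw => hasDerivAt_cauchyKernel
      (fun heq => hball w hw ⟨s, uIoc_subset_uIcc hs, heq⟩) _ _

lemma differentiableOn_cauchyIntegral (hγ : LipschitzWith K γ)
    (hh : ContinuousOn h (uIcc a b)) {V : Set ℂ} (hV : V ⊆ (γ '' uIcc a b)ᶜ) :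
    DifferentiableOn ℂ (cauchyIntegral γ a b h) V := fun _ hw =>
  (hasDerivAt_cauchyIntegral hγ hh (hV hw)).differentiableAt.differentiableWithinAt

lemma cauchyIntegral_split (hγ : LipschitzWith K γ) (hh : ContinuousOn h (uIcc a b))
    (hz : z ∉ γ '' uIcc a b) {p q : ℝ} (hp : p ∈ uIcc a b) (hq : q ∈ uIcc a b) :
    cauchyIntegral γ a b h z =
      cauchyIntegral γ a p h z + cauchyIntegral γ p q h z + cauchyIntegral γ q b h z := by
  have hint : ∀ x ∈ uIcc a b, ∀ y ∈ uIcc a b,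
      IntervalIntegrable (fun s => h s / (γ s - z) * deriv γ s) volume x y := fun x hx y hy =>
    (intervalIntegrable_cauchyKernel hγ hh hz).mono_set (uIcc_subset_uIcc hx hy)
  unfold cauchyIntegral
  rw [intervalIntegral.integral_add_adjacent_intervals (hint a left_mem_uIcc p hp) (hint p hp q hq),
    intervalIntegral.integral_add_adjacent_intervals (hint a left_mem_uIcc q hq)
      (hint q hq b right_mem_uIcc)]

lemma cauchyIntegral_sub_const (hγ : LipschitzWith K γ) (hh : ContinuousOn h (uIcc a b))
    (hz : z ∉ γ '' uIcc a b) (c : ℂ) :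
    cauchyIntegral γ a b (fun s => h s - c) z =
      cauchyIntegral γ a b h z - c * cauchyIntegral γ a b 1 z := by
  unfold cauchyIntegral
  rw [← intervalIntegral.integral_const_mul, ← intervalIntegral.integral_sub
    (intervalIntegrable_cauchyKernel hγ hh hz)
    ((intervalIntegrable_cauchyKernel hγ (h := 1) continuousOn_const hz).const_mul c)]
  exact intervalIntegral.integral_congr fun s _ => by simp only [Pi.one_apply]; ring

lemma cauchyIntegral_affine (γ : ℝ → ℂ) (a b : ℝ) (h : ℝ → ℂ) {u : ℂ} (hu : u ≠ 0) (ζ w : ℂ) :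
    cauchyIntegral (fun s => (γ s - ζ) / u) a b h w = cauchyIntegral γ a b h (ζ + u * w) := by
  unfold cauchyIntegral
  refine intervalIntegral.integral_congr fun s _ => ?_
  have hkernel : γ s - (ζ + u * w) = u * ((γ s - ζ) / u - w) := by field_simp; ring
  simp only [deriv_div_const, deriv_sub_const, hkernel]
  field_simp

lemma cauchyIntegral_one_eq_log_sub_log (hγ : LipschitzWith K γ) {c : ℂ}
    (hslit : ∀ s ∈ uIcc a b, c * (γ s - z) ∈ Complex.slitPlane) :
    cauchyIntegral γ a b 1 z =
      Complex.log (c * (γ b - z)) - Complex.log (c * (γ a - z)) := by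
  have hne : ∀ s ∈ uIcc a b, c * (γ s - z) ≠ 0 := fun s hs =>
    Complex.slitPlane_ne_zero (hslit s hs)
  refine integral_comp_mul_deriv_of_hasStrictDerivAt hγ (F := fun w => Complex.log (c * (w - z)))
    (F' := fun w => 1 / (w - z)) (fun s hs => ?_) (continuousOn_const.div
      (by have := hγ.continuous; fun_prop) fun s hs => right_ne_zero_of_mul (hne s hs))
  have hsub : HasStrictDerivAt (fun w => w - z) 1 (γ s) := (hasStrictDerivAt_id _).sub_const z
  refine ((hsub.const_mul c).clog (hslit s hs)).congr_deriv ?_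
  rw [mul_one, one_div, div_mul_cancel_left₀ (left_ne_zero_of_mul (hne s hs))]

lemma hasSum_cauchyKernel {x : ℂ} (hx : ‖x‖ < ‖z‖) (c : ℂ) :
    HasSum (fun n : ℕ => -z⁻¹ ^ (n + 1) * (x ^ n * c)) (c / (x - z)) := by
  have hz : z ≠ 0 := norm_pos_iff.1 ((norm_nonneg x).trans_lt hx)
  have hxz : x - z ≠ 0 := sub_ne_zero.2 fun h => hx.ne (congrArg norm h)
  have hgeo := (hasSum_geometric_of_norm_lt_one (ξ := x / z)
    (by rwa [norm_div, div_lt_one (norm_pos_iff.2 hz)])).mul_left (-z⁻¹ * c)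
  have hlim : -z⁻¹ * c * (1 - x / z)⁻¹ = c / (x - z) := by
    rw [one_sub_div hz, ← neg_sub x z]
    field_simp
  rw [hlim] at hgeo
  refine hgeo.congr_fun fun n => ?_
  rw [div_pow, pow_succ, inv_pow]
  ring

lemma norm_cauchyKernel_series_term_le {x c : ℂ} {R B : ℝ} (hx : ‖x‖ ≤ R) (hc : ‖c‖ ≤ B) (n : ℕ) :
    ‖-z⁻¹ ^ (n + 1) * (x ^ n * c)‖ ≤ ‖z‖⁻¹ * B * (R / ‖z‖) ^ n := by
  have hB : 0 ≤ B := (norm_nonneg c).trans hc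
  calc ‖-z⁻¹ ^ (n + 1) * (x ^ n * c)‖ = ‖z‖⁻¹ * ‖c‖ * (‖x‖ / ‖z‖) ^ n := by
        rw [norm_mul, norm_neg, norm_mul, norm_pow, norm_pow, norm_inv, div_pow, pow_succ,
          inv_pow]
        ring
    _ ≤ ‖z‖⁻¹ * B * (R / ‖z‖) ^ n := by gcongr

namespace HasVanishingMoments

lemma cauchyIntegral_eq_zero_of_forall_norm_le (hmom : HasVanishingMoments γ a b h)
    (hγ : LipschitzWith K γ) (hh : ContinuousOn h (uIcc a b)) {R : ℝ}
    (hR : ∀ s ∈ uIcc a b, ‖γ s‖ ≤ R) (hz : R < ‖z‖) : cauchyIntegral γ a b h z = 0 := by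
  have hR₀ : 0 ≤ R := (norm_nonneg _).trans (hR a left_mem_uIcc)
  obtain ⟨B, hB⟩ := isCompact_uIcc.exists_bound_of_continuousOn hh
  have hdensity : ∀ s ∈ uIcc a b, ‖h s * deriv γ s‖ ≤ B * K := fun s hs => by
    rw [norm_mul]
    exact mul_le_mul (hB s hs) (norm_deriv_le_of_lipschitz hγ) (norm_nonneg _)
      ((norm_nonneg _).trans (hB s hs))
  have hsummable : Summable fun n : ℕ => ‖z‖⁻¹ * (B * K) * (R / ‖z‖) ^ n :=
    (summable_geometric_of_lt_one (by positivity)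
      ((div_lt_one (hR₀.trans_lt hz)).2 hz)).mul_left _
  have hsum := intervalIntegral.hasSum_integral_of_dominated_convergence (μ := volume)
    (a := a) (b := b)
    (F := fun n s => -z⁻¹ ^ (n + 1) * (γ s ^ n * (h s * deriv γ s)))
    (f := fun s => h s * deriv γ s / (γ s - z)) (fun n _ => ‖z‖⁻¹ * (B * K) * (R / ‖z‖) ^ n)
    (fun n => ?_)
    (fun n => Eventually.of_forall fun s hs => norm_cauchyKernel_series_term_le
      (hR s (uIoc_subset_uIcc hs)) (hdensity s (uIoc_subset_uIcc hs)) n)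
    (Eventually.of_forall fun _ _ => hsummable) intervalIntegrable_const
    (Eventually.of_forall fun s hs =>
      hasSum_cauchyKernel ((hR s (uIoc_subset_uIcc hs)).trans_lt hz) _)
  · have hmoment : ∀ n : ℕ, ∫ s in a..b, γ s ^ n * (h s * deriv γ s) = 0 := fun n => by
      simpa only [mul_assoc] using hmom n
    simp only [intervalIntegral.integral_const_mul, hmoment, mul_zero] at hsum
    simpa only [cauchyIntegral, div_mul_eq_mul_div] using hsum.unique hasSum_zero
  · simp only [← mul_assoc]
    refine (intervalIntegrable_mul_deriv hγ ?_).def'.aestronglyMeasurable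
    exact (continuousOn_const.mul (hγ.continuous.continuousOn.pow n)).mul hh

lemma cauchyIntegral_eq_zero_of_not_isBounded (hmom : HasVanishingMoments γ a b h)
    (hγ : LipschitzWith K γ) (hh : ContinuousOn h (uIcc a b)) (hz : z ∉ γ '' uIcc a b)
    (hunbdd : ¬ Bornology.IsBounded (connectedComponentIn (γ '' uIcc a b)ᶜ z)) :
    cauchyIntegral γ a b h z = 0 := by
  have hopen : IsOpen (connectedComponentIn (γ '' uIcc a b)ᶜ z) :=
    (isCompact_uIcc.image hγ.continuous).isClosed.isOpen_compl.connectedComponentIn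
  obtain ⟨R, hR⟩ := isCompact_uIcc.exists_bound_of_continuousOn
    (hγ.continuous.continuousOn (s := uIcc a b))
  obtain ⟨w, hw, hRw⟩ : ∃ w ∈ connectedComponentIn (γ '' uIcc a b)ᶜ z, R < ‖w‖ := by
    by_contra! hle
    exact hunbdd (isBounded_iff_forall_norm_le.2 ⟨R, hle⟩)
  refine ((differentiableOn_cauchyIntegral hγ hh
    (connectedComponentIn_subset _ _)).analyticOnNhd
    hopen).eqOn_zero_of_preconnected_of_eventuallyEq_zero isPreconnected_connectedComponentIn hw ?_
    (mem_connectedComponentIn hz)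
  filter_upwards [(isOpen_lt continuous_const continuous_norm).mem_nhds hRw] with y hy
  exact hmom.cauchyIntegral_eq_zero_of_forall_norm_le hγ hh hR hy

lemma one (hγ : LipschitzWith K γ) (hclosed : γ a = γ b) : HasVanishingMoments γ a b 1 := by
  intro k
  have hk : (k + 1 : ℂ) ≠ 0 := Nat.cast_add_one_ne_zero k
  simp only [Pi.one_apply, mul_one]
  rw [integral_comp_mul_deriv_of_hasStrictDerivAt hγ (F := fun w => w ^ (k + 1) / (k + 1))
    (F' := fun w => w ^ k) (fun s _ => ?_) (by have := hγ.continuous; fun_prop), hclosed, sub_self]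
  exact ((hasStrictDerivAt_pow (k + 1) (γ s)).div_const (k + 1 : ℂ)).congr_deriv
    (by push_cast; field_simp)

end HasVanishingMoments

lemma hasDerivAt_cauchyIntegral_one (hγ : LipschitzWith K γ) (hclosed : γ a = γ b)
    (hz : z ∉ γ '' uIcc a b) : HasDerivAt (cauchyIntegral γ a b 1) 0 z := by
  have hne : ∀ s ∈ uIcc a b, γ s - z ≠ 0 := fun s hs h => hz ⟨s, hs, sub_eq_zero.1 h⟩
  have hone : ContinuousOn (1 : ℝ → ℂ) (uIcc a b) := continuousOn_const
  refine (hasDerivAt_cauchyIntegral hγ hone hz).congr_deriv ?_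
  simp only [Pi.one_apply]
  rw [integral_comp_mul_deriv_of_hasStrictDerivAt hγ (F := fun w => -(w - z)⁻¹)
    (F' := fun w => 1 / (w - z) ^ 2) (fun s hs => ?_)
    (continuousOn_div_sub_pow hγ.continuous.continuousOn hone hz 2), hclosed, sub_self]
  have hsub : HasStrictDerivAt (fun w => w - z) 1 (γ s) := (hasStrictDerivAt_id _).sub_const z
  exact ((hasStrictDerivAt_inv (hne s hs)).comp (γ s) hsub).fun_neg.congr_deriv
    (by simp [one_div])

lemma cauchyIntegral_one_eq_of_isPreconnected (hγ : LipschitzWith K γ) (hclosed : γ a = γ b)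
    {V : Set ℂ} (hVo : IsOpen V) (hVc : IsPreconnected V) (hV : V ⊆ (γ '' uIcc a b)ᶜ) {w : ℂ}
    (hz : z ∈ V) (hw : w ∈ V) : cauchyIntegral γ a b 1 z = cauchyIntegral γ a b 1 w :=
  hVo.is_const_of_deriv_eq_zero hVc (differentiableOn_cauchyIntegral hγ continuousOn_const hV)
    (fun _ hx => (hasDerivAt_cauchyIntegral_one hγ hclosed (hV hx)).deriv) hz hw

end CauchyIntegral

section Jump

/-- The double cone about the imaginary axis on which `|Im w|` is comparable to `‖w‖`, without its
apex. In coordinates where the tangent of a curve is the real axis, it describes nontangential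
approach from both sides. -/
def verticalCone (m : ℝ) : Set ℂ := {w | w ≠ 0 ∧ m * ‖w‖ ≤ |w.im|}

/-- The difference of the values of the Cauchy integral at the points `ζ + v` and `ζ - v`. -/
noncomputable def cauchyJump (γ : ℝ → ℂ) (a b : ℝ) (h : ℝ → ℂ) (ζ v : ℂ) : ℂ :=
  cauchyIntegral γ a b h (ζ + v) - cauchyIntegral γ a b h (ζ - v)

/-- The arc `γ` over `[p, q]` stays, around the interior parameter `s₀`, relatively `κ`-close to
its tangent line `s ↦ s - s₀`. This is the normalized situation `γ s₀ = 0`, `γ' s₀ = 1`. -/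
structure IsTangentArc (γ : ℝ → ℂ) (s₀ p q κ : ℝ) : Prop where
  left_lt : p < s₀
  lt_right : s₀ < q
  norm_sub_tangent_le : ∀ s ∈ Icc p q, ‖γ s - (s - s₀ : ℝ)‖ ≤ κ * |s - s₀|

variable {γ h : ℝ → ℂ} {a b p q s₀ m : ℝ} {K : ℝ≥0} {ζ v w : ℂ}

lemma neg_mem_verticalCone (hw : w ∈ verticalCone m) : -w ∈ verticalCone m := by
  simpa [verticalCone] using hw

lemma norm_pos_of_mem_verticalCone (hw : w ∈ verticalCone m) : 0 < ‖w‖ := norm_pos_iff.2 hw.1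

lemma le_one_of_mem_verticalCone (hw : w ∈ verticalCone m) : m ≤ 1 :=
  le_of_mul_le_mul_right (by simpa using hw.2.trans (Complex.abs_im_le_norm w))
    (norm_pos_of_mem_verticalCone hw)

lemma tendsto_neg_nhdsWithin_verticalCone (m : ℝ) :
    Tendsto Neg.neg (𝓝[verticalCone m] 0) (𝓝[verticalCone m] 0) :=
  tendsto_nhdsWithin_of_tendsto_nhds_of_eventually_within _
    (tendsto_nhdsWithin_of_tendsto_nhds (by simpa using (continuous_neg (G := ℂ)).tendsto 0))
    (eventually_mem_nhdsWithin.mono fun _ => neg_mem_verticalCone)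

lemma cauchyJump_neg (γ : ℝ → ℂ) (a b : ℝ) (h : ℝ → ℂ) (ζ v : ℂ) :
    cauchyJump γ a b h ζ (-v) = -cauchyJump γ a b h ζ v := by
  simp only [cauchyJump, sub_neg_eq_add, ← sub_eq_add_neg, neg_sub]

lemma cauchyJump_affine (γ : ℝ → ℂ) (a b : ℝ) (h : ℝ → ℂ) {u : ℂ} (hu : u ≠ 0) (ζ w : ℂ) :
    cauchyJump (fun s => (γ s - ζ) / u) a b h 0 w = cauchyJump γ a b h ζ (u * w) := by
  simp only [cauchyJump, cauchyIntegral_affine γ a b h hu, zero_add, zero_sub, mul_neg,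
    ← sub_eq_add_neg]

lemma cauchyJump_split (hγ : LipschitzWith K γ) (hh : ContinuousOn h (uIcc a b))
    (hadd : ζ + v ∉ γ '' uIcc a b) (hsub : ζ - v ∉ γ '' uIcc a b) (hp : p ∈ uIcc a b)
    (hq : q ∈ uIcc a b) : cauchyJump γ a b h ζ v =
      cauchyJump γ a p h ζ v + cauchyJump γ p q h ζ v + cauchyJump γ q b h ζ v := by
  unfold cauchyJump
  rw [cauchyIntegral_split hγ hh hadd hp hq, cauchyIntegral_split hγ hh hsub hp hq]
  ring

lemma cauchyJump_sub_const (hγ : LipschitzWith K γ) (hh : ContinuousOn h (uIcc a b))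
    (hadd : ζ + v ∉ γ '' uIcc a b) (hsub : ζ - v ∉ γ '' uIcc a b) (c : ℂ) :
    cauchyJump γ a b (fun s => h s - c) ζ v =
      cauchyJump γ a b h ζ v - c * cauchyJump γ a b 1 ζ v := by
  unfold cauchyJump
  rw [cauchyIntegral_sub_const hγ hh hadd, cauchyIntegral_sub_const hγ hh hsub]
  ring

lemma cauchyJump_eq_integral (hγ : LipschitzWith K γ) (hh : ContinuousOn h (uIcc a b))
    (hadd : ζ + v ∉ γ '' uIcc a b) (hsub : ζ - v ∉ γ '' uIcc a b) :
    cauchyJump γ a b h ζ v =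
      ∫ s in a..b, h s * (2 * v / ((γ s - (ζ + v)) * (γ s - (ζ - v)))) * deriv γ s := by
  unfold cauchyJump cauchyIntegral
  rw [← intervalIntegral.integral_sub (intervalIntegrable_cauchyKernel hγ hh hadd)
    (intervalIntegrable_cauchyKernel hγ hh hsub)]
  refine intervalIntegral.integral_congr fun s hs => ?_
  have hne_add : γ s - (ζ + v) ≠ 0 := fun h₀ => hadd ⟨s, hs, sub_eq_zero.1 h₀⟩
  have hne_sub : γ s - (ζ - v) ≠ 0 := fun h₀ => hsub ⟨s, hs, sub_eq_zero.1 h₀⟩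
  field_simp
  ring

lemma tendsto_cauchyJump_of_notMem (hγ : LipschitzWith K γ) (hh : ContinuousOn h (uIcc a b))
    (hζ : ζ ∉ γ '' uIcc a b) : Tendsto (cauchyJump γ a b h ζ) (𝓝 0) (𝓝 0) := by
  have hcont := (hasDerivAt_cauchyIntegral hγ hh hζ).continuousAt
  have hadd : Tendsto (fun v => ζ + v) (𝓝 0) (𝓝 ζ) := by
    simpa using (continuous_const_add ζ).tendsto 0
  have hsub : Tendsto (fun v => ζ - v) (𝓝 0) (𝓝 ζ) := by
    simpa using (continuous_sub_left ζ).tendsto 0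
  have hjump := (hcont.tendsto.comp hadd).sub (hcont.tendsto.comp hsub)
  rwa [sub_self] at hjump

lemma integral_div_sq_add_sub_sq_le_pi (c s₀ p q : ℝ) :
    ∫ s in p..q, c / (c ^ 2 + (s - s₀) ^ 2) ≤ Real.pi := by
  rw [intervalIntegral.integral_comp_sub_right (fun x => c / (c ^ 2 + x ^ 2)),
    integral_div_sq_add_sq]
  linarith [Real.arctan_lt_pi_div_two ((q - s₀) / c),
    Real.neg_pi_div_two_lt_arctan ((p - s₀) / c)]

lemma log_sub_log_neg_of_im_pos {x : ℂ} (hx : 0 < x.im) :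
    Complex.log x - Complex.log (-x) = Real.pi * Complex.I := by
  simp only [Complex.log, norm_neg, Complex.arg_neg_eq_arg_sub_pi_of_im_pos hx]
  push_cast
  ring

lemma I_mul_sub_mem_slitPlane_of_norm_sub_le (hm : 0 < m) (hw : w ∈ verticalCone m)
    (him : 0 < w.im) {x : ℂ} {t : ℝ} (hx : ‖x - t‖ ≤ m / 6 * |t|) :
    Complex.I * (x - w) ∈ Complex.slitPlane := by
  rw [Complex.mem_slitPlane_iff, or_iff_not_imp_right, not_not]
  intro hre
  have hwim : m * ‖w‖ ≤ w.im := abs_of_pos him ▸ hw.2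
  have hxw : x.re = w.re := by simpa [sub_eq_zero] using hre
  have hxre : |x.re - t| ≤ m / 6 * |t| := by
    simpa using (Complex.abs_re_le_norm (x - t)).trans hx
  have hxim : |x.im| ≤ m / 6 * |t| := by
    simpa using (Complex.abs_im_le_norm (x - t)).trans hx
  have ht : |t| ≤ 2 * ‖w‖ := by
    have htri : |t| ≤ |x.re - t| + |x.re| := by
      simpa [add_comm, abs_sub_comm] using abs_sub_le t x.re 0
    nlinarith [abs_nonneg t, le_one_of_mem_verticalCone hw, hxw ▸ Complex.abs_re_le_norm w]
  have hlt : x.im < w.im := by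
    nlinarith [le_abs_self x.im, norm_pos_of_mem_verticalCone hw,
      mul_pos hm (norm_pos_of_mem_verticalCone hw)]
  simpa using hlt

lemma exists_isTangentArc (hγ : HasDerivAt γ 1 s₀) (h₀ : γ s₀ = 0) {κ : ℝ} (hκ : 0 < κ)
    {V : Set ℝ} (hV : V ∈ 𝓝 s₀) : ∃ p q, IsTangentArc γ s₀ p q κ ∧ Icc p q ⊆ V := by
  have htangent : ∀ᶠ s in 𝓝 s₀, ‖γ s - (s - s₀ : ℝ)‖ ≤ κ * |s - s₀| := by
    simpa [h₀] using (hasDerivAt_iff_isLittleO.1 hγ).bound hκ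
  obtain ⟨r, hr, hball⟩ :=
    Metric.nhds_basis_closedBall.mem_iff.1 (inter_mem htangent hV)
  rw [Real.closedBall_eq_Icc] at hball
  exact ⟨s₀ - r, s₀ + r, ⟨by linarith, by linarith, fun s hs => (hball hs).1⟩,
    fun s hs => (hball hs).2⟩

namespace IsTangentArc

lemma mem_Icc {κ : ℝ} (harc : IsTangentArc γ s₀ p q κ) : s₀ ∈ Icc p q :=
  ⟨harc.left_lt.le, harc.lt_right.le⟩

lemma le {κ : ℝ} (harc : IsTangentArc γ s₀ p q κ) : p ≤ q :=
  harc.mem_Icc.1.trans harc.mem_Icc.2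

lemma le_norm_sub (harc : IsTangentArc γ s₀ p q (m / 6)) (hm : 0 < m) (hw : w ∈ verticalCone m)
    {s : ℝ} (hs : s ∈ Icc p q) : m / 6 * (|s - s₀| + ‖w‖) ≤ ‖γ s - w‖ := by
  have htangent := harc.norm_sub_tangent_le s hs
  have him : |w.im| ≤ ‖((s - s₀ : ℝ) : ℂ) - w‖ := by
    simpa using Complex.abs_im_le_norm (((s - s₀ : ℝ) : ℂ) - w)
  have habs : |s - s₀| ≤ ‖((s - s₀ : ℝ) : ℂ) - w‖ + ‖w‖ := by
    rw [← Real.norm_eq_abs, ← Complex.norm_real]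
    exact norm_le_norm_sub_add _ w
  have htriangle : ‖((s - s₀ : ℝ) : ℂ) - w‖ ≤ ‖γ s - w‖ + ‖γ s - (s - s₀ : ℝ)‖ := by
    simpa using norm_sub_le (γ s - w) (γ s - (s - s₀ : ℝ))
  nlinarith [norm_nonneg w, abs_nonneg (s - s₀), norm_nonneg (((s - s₀ : ℝ) : ℂ) - w), hw.2,
    le_one_of_mem_verticalCone hw]

lemma notMem_image (harc : IsTangentArc γ s₀ p q (m / 6)) (hm : 0 < m)
    (hw : w ∈ verticalCone m) : w ∉ γ '' Icc p q := by
  rintro ⟨s, hs, rfl⟩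
  have hle := harc.le_norm_sub hm hw hs
  have := norm_pos_of_mem_verticalCone hw
  rw [sub_self, norm_zero] at hle
  exact hle.not_gt (by positivity)

lemma norm_jumpKernel_le (harc : IsTangentArc γ s₀ p q (m / 6)) (hm : 0 < m)
    (hw : w ∈ verticalCone m) {s : ℝ} (hs : s ∈ Icc p q) :
    ‖2 * w / ((γ s - (0 + w)) * (γ s - (0 - w)))‖ ≤
      72 / m ^ 2 * (‖w‖ / (‖w‖ ^ 2 + (s - s₀) ^ 2)) := by
  have hw₀ := norm_pos_of_mem_verticalCone hw
  have hadd := harc.le_norm_sub hm hw hs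
  have hsub := harc.le_norm_sub hm (neg_mem_verticalCone hw) hs
  rw [norm_neg] at hsub
  rw [zero_add, zero_sub, norm_div, norm_mul, norm_mul, Complex.norm_ofNat]
  calc 2 * ‖w‖ / (‖γ s - w‖ * ‖γ s - -w‖)
      ≤ 2 * ‖w‖ / ((m / 6 * (|s - s₀| + ‖w‖)) * (m / 6 * (|s - s₀| + ‖w‖))) := by gcongr
    _ = 72 / m ^ 2 * (‖w‖ / (|s - s₀| + ‖w‖) ^ 2) := by field_simp; ring
    _ ≤ 72 / m ^ 2 * (‖w‖ / (‖w‖ ^ 2 + (s - s₀) ^ 2)) := by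
        gcongr
        rw [← sq_abs (s - s₀)]
        nlinarith [abs_nonneg (s - s₀)]

lemma norm_cauchyJump_le (harc : IsTangentArc γ s₀ p q (m / 6)) (hm : 0 < m)
    (hγ : LipschitzWith K γ) (hh : ContinuousOn h (Icc p q)) {ε : ℝ}
    (hε : ∀ s ∈ Icc p q, ‖h s‖ ≤ ε) (hw : w ∈ verticalCone m) :
    ‖cauchyJump γ p q h 0 w‖ ≤ ε * (72 / m ^ 2) * K * Real.pi := by
  have hε₀ : 0 ≤ ε := (norm_nonneg _).trans (hε s₀ harc.mem_Icc)
  have hpos := norm_pos_of_mem_verticalCone hw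
  rw [← uIcc_of_le harc.le] at hh
  rw [cauchyJump_eq_integral hγ hh
    (by rw [zero_add, uIcc_of_le harc.le]; exact harc.notMem_image hm hw)
    (by rw [zero_sub, uIcc_of_le harc.le]; exact harc.notMem_image hm (neg_mem_verticalCone hw))]
  have hbound : ∀ s ∈ Ioc p q,
      ‖h s * (2 * w / ((γ s - (0 + w)) * (γ s - (0 - w)))) * deriv γ s‖ ≤
        ε * (72 / m ^ 2) * K * (‖w‖ / (‖w‖ ^ 2 + (s - s₀) ^ 2)) := fun s hs => by
    have hs' := Ioc_subset_Icc_self hs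
    rw [norm_mul, norm_mul]
    calc _ ≤ ε * (72 / m ^ 2 * (‖w‖ / (‖w‖ ^ 2 + (s - s₀) ^ 2))) * K := by
          gcongr
          · exact hε s hs'
          · exact harc.norm_jumpKernel_le hm hw hs'
          · exact norm_deriv_le_of_lipschitz hγ
      _ = _ := by ring
  have hcont : Continuous fun s : ℝ => ‖w‖ / (‖w‖ ^ 2 + (s - s₀) ^ 2) :=
    continuous_const.div (by fun_prop) fun s => by positivity
  refine (intervalIntegral.norm_integral_le_of_norm_le harc.le (Eventually.of_forall hbound)
    ((hcont.intervalIntegrable p q).const_mul _)).trans ?_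
  rw [intervalIntegral.integral_const_mul]
  gcongr
  exact integral_div_sq_add_sub_sq_le_pi _ _ _ _

lemma I_mul_sub_mem_slitPlane (harc : IsTangentArc γ s₀ p q (m / 6)) (hm : 0 < m)
    (hw : w ∈ verticalCone m) (him : 0 < w.im) {s : ℝ} (hs : s ∈ Icc p q) :
    Complex.I * (γ s - w) ∈ Complex.slitPlane :=
  I_mul_sub_mem_slitPlane_of_norm_sub_le hm hw him (harc.norm_sub_tangent_le s hs)

lemma neg_I_mul_sub_neg_mem_slitPlane (harc : IsTangentArc γ s₀ p q (m / 6)) (hm : 0 < m)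
    (hw : w ∈ verticalCone m) (him : 0 < w.im) {s : ℝ} (hs : s ∈ Icc p q) :
    -Complex.I * (γ s - -w) ∈ Complex.slitPlane := by
  have htangent : ‖-γ s - (-(s - s₀) : ℝ)‖ ≤ m / 6 * |-(s - s₀)| := by
    rw [Complex.ofReal_neg, ← neg_sub', norm_neg, abs_neg]
    exact harc.norm_sub_tangent_le s hs
  convert I_mul_sub_mem_slitPlane_of_norm_sub_le hm hw him htangent using 1
  ring

lemma cauchyJump_one_eq (harc : IsTangentArc γ s₀ p q (m / 6)) (hm : 0 < m)
    (hγ : LipschitzWith K γ) (hw : w ∈ verticalCone m) (him : 0 < w.im) :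
    cauchyJump γ p q 1 0 w =
      Complex.log (Complex.I * (γ q - w)) - Complex.log (Complex.I * (γ p - w)) -
        (Complex.log (-Complex.I * (γ q - -w)) - Complex.log (-Complex.I * (γ p - -w))) := by
  rw [cauchyJump, zero_add, zero_sub,
    cauchyIntegral_one_eq_log_sub_log hγ fun s hs =>
      harc.I_mul_sub_mem_slitPlane hm hw him (uIcc_of_le harc.le ▸ hs),
    cauchyIntegral_one_eq_log_sub_log hγ fun s hs =>
      harc.neg_I_mul_sub_neg_mem_slitPlane hm hw him (uIcc_of_le harc.le ▸ hs)]

lemma re_left_neg {κ : ℝ} (harc : IsTangentArc γ s₀ p q κ) (hκ : κ < 1) : (γ p).re < 0 := by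
  have hre := (Complex.abs_re_le_norm _).trans (harc.norm_sub_tangent_le p (left_mem_Icc.2 harc.le))
  rw [Complex.sub_re, Complex.ofReal_re, abs_of_neg (sub_neg.2 harc.left_lt)] at hre
  nlinarith [(abs_le.1 hre).2, harc.left_lt]

lemma re_right_pos {κ : ℝ} (harc : IsTangentArc γ s₀ p q κ) (hκ : κ < 1) : 0 < (γ q).re := by
  have hre := (Complex.abs_re_le_norm _).trans
    (harc.norm_sub_tangent_le q (right_mem_Icc.2 harc.le))
  rw [Complex.sub_re, Complex.ofReal_re, abs_of_pos (sub_pos.2 harc.lt_right)] at hre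
  nlinarith [(abs_le.1 hre).1, harc.lt_right]

lemma tendsto_cauchyJump_one (harc : IsTangentArc γ s₀ p q (m / 6)) (hm : 0 < m) (hm₁ : m ≤ 1)
    (hγ : LipschitzWith K γ) :
    Tendsto (cauchyJump γ p q 1 0) (𝓝[verticalCone m ∩ {w | 0 < w.im}] 0)
      (𝓝 (2 * Real.pi * Complex.I)) := by
  have hp := harc.re_left_neg (by linarith)
  have hq := harc.re_right_pos (by linarith)
  have hcont : ContinuousAt (fun w : ℂ =>
      Complex.log (Complex.I * (γ q - w)) - Complex.log (Complex.I * (γ p - w)) -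
        (Complex.log (-Complex.I * (γ q - -w)) - Complex.log (-Complex.I * (γ p - -w)))) 0 := by
    refine (ContinuousAt.sub ?_ ?_).sub (ContinuousAt.sub ?_ ?_) <;>
      refine ContinuousAt.clog (by fun_prop) (Complex.mem_slitPlane_iff.2 (Or.inr ?_)) <;>
      simp [hp.ne, hq.ne']
  have hlim : Complex.log (Complex.I * (γ q - 0)) - Complex.log (Complex.I * (γ p - 0)) -
      (Complex.log (-Complex.I * (γ q - -0)) - Complex.log (-Complex.I * (γ p - -0))) =
        2 * Real.pi * Complex.I := by
    have hlog_right := log_sub_log_neg_of_im_pos (x := Complex.I * γ q) (by simpa using hq)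
    have hlog_left := log_sub_log_neg_of_im_pos (x := -Complex.I * γ p) (by simpa using hp)
    rw [← neg_mul] at hlog_right
    rw [← neg_mul, neg_neg] at hlog_left
    simp only [neg_zero, sub_zero]
    linear_combination hlog_right + hlog_left
  rw [← hlim]
  refine (hcont.tendsto.mono_left nhdsWithin_le_nhds).congr' ?_
  filter_upwards [self_mem_nhdsWithin] with w hw
  exact (harc.cauchyJump_one_eq hm hγ hw.1 hw.2).symm

end IsTangentArc

/-- `s₀` is an interior parameter at which `γ` is differentiable with nonzero derivative `u`, and
the point `γ s₀` is visited only once. -/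
structure IsRegularPoint (γ : ℝ → ℂ) (a b s₀ : ℝ) (u : ℂ) : Prop where
  mem_Ioo : s₀ ∈ Ioo a b
  hasDerivAt : HasDerivAt γ u s₀
  ne_zero : u ≠ 0
  eq_of_apply_eq : ∀ s ∈ Icc a b, γ s = γ s₀ → s = s₀

lemma lipschitzWith_sub_div (hγ : LipschitzWith K γ) (ζ u : ℂ) :
    LipschitzWith (K / ‖u‖₊) fun s => (γ s - ζ) / u := by
  refine LipschitzWith.of_dist_le_mul fun s t => ?_
  rw [dist_eq_norm, ← sub_div, sub_sub_sub_cancel_right, norm_div, ← dist_eq_norm, NNReal.coe_div,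
    coe_nnnorm, div_mul_eq_mul_div]
  gcongr
  exact hγ.dist_le_mul s t

namespace IsRegularPoint

lemma notMem_image_uIcc_left {u : ℂ} (hs₀ : IsRegularPoint γ a b s₀ u) (hap : a ≤ p)
    (hp : p < s₀) : γ s₀ ∉ γ '' uIcc a p := by
  rw [uIcc_of_le hap]
  rintro ⟨s, hs, hγs⟩
  have := hs₀.eq_of_apply_eq s ⟨hs.1, by linarith [hs.2, hs₀.mem_Ioo.2]⟩ hγs
  linarith [hs.2]

lemma notMem_image_uIcc_right {u : ℂ} (hs₀ : IsRegularPoint γ a b s₀ u) (hqb : q ≤ b)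
    (hq : s₀ < q) : γ s₀ ∉ γ '' uIcc q b := by
  rw [uIcc_of_le hqb]
  rintro ⟨s, hs, hγs⟩
  have := hs₀.eq_of_apply_eq s ⟨by linarith [hs.1, hs₀.mem_Ioo.1], hs.2⟩ hγs
  linarith [hs.1]

lemma normalize {u : ℂ} (hs₀ : IsRegularPoint γ a b s₀ u) :
    IsRegularPoint (fun s => (γ s - γ s₀) / u) a b s₀ 1 where
  mem_Ioo := hs₀.mem_Ioo
  hasDerivAt := by
    simpa [div_self hs₀.ne_zero] using (hs₀.hasDerivAt.sub_const (γ s₀)).div_const u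
  ne_zero := one_ne_zero
  eq_of_apply_eq s hs hγs := hs₀.eq_of_apply_eq s hs <| by
    simpa [hs₀.ne_zero, sub_eq_zero] using hγs

section Normalized

variable (hs₀ : IsRegularPoint γ a b s₀ 1) (h₀ : γ s₀ = 0)
include hs₀ h₀

lemma eventually_notMem_image_of_apply_eq_zero (hγ : Continuous γ) (hm : 0 < m) :
    ∀ᶠ w in 𝓝[verticalCone m] 0, w ∉ γ '' Icc a b := by
  obtain ⟨p, q, harc, hpq⟩ := exists_isTangentArc hs₀.hasDerivAt h₀ (by positivity : 0 < m / 6)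
    (Icc_mem_nhds hs₀.mem_Ioo.1 hs₀.mem_Ioo.2)
  have hp := hpq (left_mem_Icc.2 harc.le)
  have hq := hpq (right_mem_Icc.2 harc.le)
  have hleft : ∀ᶠ w in 𝓝 0, w ∉ γ '' uIcc a p :=
    (isCompact_uIcc.image hγ).isClosed.isOpen_compl.mem_nhds
      (h₀ ▸ hs₀.notMem_image_uIcc_left hp.1 harc.left_lt)
  have hright : ∀ᶠ w in 𝓝 0, w ∉ γ '' uIcc q b :=
    (isCompact_uIcc.image hγ).isClosed.isOpen_compl.mem_nhds
      (h₀ ▸ hs₀.notMem_image_uIcc_right hq.2 harc.lt_right)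
  filter_upwards [self_mem_nhdsWithin, nhdsWithin_le_nhds hleft, nhdsWithin_le_nhds hright]
    with w hw hwleft hwright
  rw [uIcc_of_le hp.1] at hwleft
  rw [uIcc_of_le hq.2] at hwright
  rw [← Icc_union_Icc_eq_Icc hp.1 hp.2, ← Icc_union_Icc_eq_Icc harc.le hq.2, image_union,
    image_union]
  simp only [mem_union, not_or]
  exact ⟨hwleft, harc.notMem_image hm hw, hwright⟩

lemma tendsto_cauchyJump_sub_cauchyJump (hγ : LipschitzWith K γ) (hh : ContinuousOn h (uIcc a b))
    (hm : 0 < m) (hp : p ∈ Ico a s₀) (hq : q ∈ Ioc s₀ b) :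
    Tendsto (fun w => cauchyJump γ a b h 0 w - cauchyJump γ p q h 0 w) (𝓝[verticalCone m] 0)
      (𝓝 0) := by
  have hab : a ≤ b := (hs₀.mem_Ioo.1.trans hs₀.mem_Ioo.2).le
  have hp' : p ∈ uIcc a b := uIcc_of_le hab ▸ ⟨hp.1, hp.2.le.trans hs₀.mem_Ioo.2.le⟩
  have hq' : q ∈ uIcc a b := uIcc_of_le hab ▸ ⟨hs₀.mem_Ioo.1.le.trans hq.1.le, hq.2⟩
  have houter := (tendsto_cauchyJump_of_notMem hγ (hh.mono (uIcc_subset_uIcc_left hp'))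
      (h₀ ▸ hs₀.notMem_image_uIcc_left hp.1 hp.2)).add
    (tendsto_cauchyJump_of_notMem hγ (hh.mono (uIcc_subset_uIcc_right hq'))
      (h₀ ▸ hs₀.notMem_image_uIcc_right hq.2 hq.1))
  rw [add_zero] at houter
  have hnotMem := hs₀.eventually_notMem_image_of_apply_eq_zero h₀ hγ.continuous hm
  refine (houter.mono_left nhdsWithin_le_nhds).congr' ?_
  filter_upwards [hnotMem, (tendsto_neg_nhdsWithin_verticalCone m).eventually hnotMem]
    with w hw hw_neg
  rw [← uIcc_of_le hab] at hw hw_neg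
  rw [cauchyJump_split hγ hh (by rwa [zero_add]) (by rwa [zero_sub]) hp' hq']
  ring

lemma tendsto_cauchyJump_of_apply_eq_zero (hγ : LipschitzWith K γ)
    (hh : ContinuousOn h (uIcc a b)) (hh₀ : h s₀ = 0) (hm : 0 < m) :
    Tendsto (cauchyJump γ a b h 0) (𝓝[verticalCone m] 0) (𝓝 0) := by
  have hab : a ≤ b := (hs₀.mem_Ioo.1.trans hs₀.mem_Ioo.2).le
  rw [Metric.tendsto_nhds]
  intro ε hε
  set A := 72 / m ^ 2 * K * Real.pi with hA
  have : 0 ≤ A := by positivity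
  have hnhds := Icc_mem_nhds hs₀.mem_Ioo.1 hs₀.mem_Ioo.2
  have hsmall : ∀ᶠ s in 𝓝 s₀, ‖h s‖ < ε / 2 / (A + 1) := by
    have hcont := ((uIcc_of_le hab ▸ hh).continuousAt hnhds).norm
    exact hcont.eventually_lt continuousAt_const (by rw [hh₀, norm_zero]; positivity)
  obtain ⟨p, q, harc, hpq⟩ := exists_isTangentArc hs₀.hasDerivAt h₀ (by positivity : 0 < m / 6)
    (inter_mem hnhds hsmall)
  have hp := (hpq (left_mem_Icc.2 harc.le)).1
  have hq := (hpq (right_mem_Icc.2 harc.le)).1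
  have houter := hs₀.tendsto_cauchyJump_sub_cauchyJump h₀ hγ hh hm ⟨hp.1, harc.left_lt⟩
    ⟨harc.lt_right, hq.2⟩
  filter_upwards [self_mem_nhdsWithin, Metric.tendsto_nhds.1 houter (ε / 2) (by positivity)]
    with w hw hw_outer
  rw [dist_zero_right] at hw_outer ⊢
  have hw_inner := harc.norm_cauchyJump_le hm hγ
    (hh.mono fun s hs => uIcc_of_le hab ▸ (hpq hs).1) (fun s hs => (hpq hs).2.le) hw
  calc ‖cauchyJump γ a b h 0 w‖
      ≤ ‖cauchyJump γ a b h 0 w - cauchyJump γ p q h 0 w‖ + ‖cauchyJump γ p q h 0 w‖ :=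
        norm_le_norm_sub_add _ _
    _ < ε / 2 + ε / 2 / (A + 1) * (A + 1) := by
        refine add_lt_add_of_lt_of_le hw_outer (hw_inner.trans ?_)
        rw [mul_assoc, mul_assoc, ← mul_assoc (72 / m ^ 2), ← hA]
        gcongr
        linarith
    _ = ε := by rw [div_mul_cancel₀ _ (by positivity)]; ring

lemma tendsto_cauchyJump_one_of_apply_eq_zero (hγ : LipschitzWith K γ) (hm : 0 < m)
    (hm₁ : m ≤ 1) : Tendsto (cauchyJump γ a b 1 0) (𝓝[verticalCone m ∩ {w | 0 < w.im}] 0)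
      (𝓝 (2 * Real.pi * Complex.I)) := by
  obtain ⟨p, q, harc, hpq⟩ := exists_isTangentArc hs₀.hasDerivAt h₀ (by positivity : 0 < m / 6)
    (Icc_mem_nhds hs₀.mem_Ioo.1 hs₀.mem_Ioo.2)
  have houter := hs₀.tendsto_cauchyJump_sub_cauchyJump h₀ hγ (h := 1) continuousOn_const hm
    ⟨(hpq (left_mem_Icc.2 harc.le)).1, harc.left_lt⟩
    ⟨harc.lt_right, (hpq (right_mem_Icc.2 harc.le)).2⟩
  simpa using (houter.mono_left (nhdsWithin_mono 0 inter_subset_left)).add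
    (harc.tendsto_cauchyJump_one hm hm₁ hγ)

lemma eventually_cauchyJump_one_ne_zero_of_apply_eq_zero (hγ : LipschitzWith K γ) (hm : 0 < m)
    (hm₁ : m ≤ 1) : ∀ᶠ w in 𝓝[verticalCone m] 0, cauchyJump γ a b 1 0 w ≠ 0 := by
  have hlim := hs₀.tendsto_cauchyJump_one_of_apply_eq_zero h₀ hγ hm hm₁
  have hupper := eventually_nhdsWithin_iff.1 (hlim.eventually_ne Complex.two_pi_I_ne_zero)
  have hlower : ∀ᶠ w in 𝓝 (0 : ℂ), -w ∈ verticalCone m ∩ {w | 0 < w.im} →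
      cauchyJump γ a b 1 0 (-w) ≠ 0 :=
    (by simpa using (continuous_neg (G := ℂ)).tendsto 0 : Tendsto Neg.neg (𝓝 (0 : ℂ)) (𝓝 0))
      |>.eventually hupper
  filter_upwards [self_mem_nhdsWithin, nhdsWithin_le_nhds hupper, nhdsWithin_le_nhds hlower]
    with w hw hw_upper hw_lower
  rw [cauchyJump_neg, neg_ne_zero] at hw_lower
  have him : w.im ≠ 0 :=
    abs_pos.1 ((mul_pos hm (norm_pos_of_mem_verticalCone hw)).trans_le hw.2)
  rcases him.lt_or_gt with hneg | hpos
  · exact hw_lower ⟨neg_mem_verticalCone hw, by simpa using hneg⟩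
  · exact hw_upper ⟨hw, hpos⟩

end Normalized

section Transfer

variable {u : ℂ} (hs₀ : IsRegularPoint γ a b s₀ u)
include hs₀

lemma eventually_notMem_image (hγ : Continuous γ) (hm : 0 < m) :
    ∀ᶠ w in 𝓝[verticalCone m] 0, γ s₀ + u * w ∉ γ '' Icc a b := by
  filter_upwards [hs₀.normalize.eventually_notMem_image_of_apply_eq_zero (by simp)
    (by fun_prop) hm] with w hw
  rintro ⟨s, hs, hγs⟩
  exact hw ⟨s, hs, by simp [hγs, hs₀.ne_zero]⟩

lemma tendsto_cauchyJump (hγ : LipschitzWith K γ) (hh : ContinuousOn h (uIcc a b))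
    (hh₀ : h s₀ = 0) (hm : 0 < m) :
    Tendsto (fun w => cauchyJump γ a b h (γ s₀) (u * w)) (𝓝[verticalCone m] 0) (𝓝 0) :=
  (hs₀.normalize.tendsto_cauchyJump_of_apply_eq_zero (by simp)
    (lipschitzWith_sub_div hγ _ _) hh hh₀ hm).congr
    (cauchyJump_affine γ a b h hs₀.ne_zero (γ s₀))

lemma eventually_cauchyJump_one_ne_zero (hγ : LipschitzWith K γ) (hm : 0 < m) (hm₁ : m ≤ 1) :
    ∀ᶠ w in 𝓝[verticalCone m] 0, cauchyJump γ a b 1 (γ s₀) (u * w) ≠ 0 := by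
  simpa only [cauchyJump_affine γ a b 1 hs₀.ne_zero] using
    hs₀.normalize.eventually_cauchyJump_one_ne_zero_of_apply_eq_zero (by simp)
      (lipschitzWith_sub_div hγ _ _) hm hm₁

end Transfer

end IsRegularPoint

end Jump

section Nontangential

/-- The Stolz region of aperture `M` at `ζ`, in `U` and relative to the boundary `J` of `U`. -/
def stolzRegion (U J : Set ℂ) (M : ℝ) (ζ : ℂ) : Set ℂ :=
  {z ∈ U | dist z ζ < M * Metric.infDist z J}

variable {γ h : ℝ → ℂ} {a b s₀ M : ℝ} {K : ℝ≥0} {u x : ℂ}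

lemma mem_verticalCone_of_norm_le_mul_norm_sub {y w : ℂ} (hM : 0 < M) (hw : w ≠ 0)
    (hstolz : ‖w‖ ≤ M * ‖y - w‖) (htangent : ‖y - w.re‖ ≤ 1 / (2 * M) * |w.re|) :
    w ∈ verticalCone (1 / (2 * M)) := by
  have him : ‖(w.re : ℂ) - w‖ = |w.im| := by
    rw [← Complex.re_add_im w]
    simp [-Complex.re_add_im]
  refine ⟨hw, ?_⟩
  have hmul : ‖w‖ ≤ M * (1 / (2 * M) * ‖w‖ + |w.im|) := by
    refine hstolz.trans ?_
    gcongr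
    calc ‖y - w‖ ≤ ‖y - w.re‖ + ‖(w.re : ℂ) - w‖ := norm_sub_le_norm_sub_add_norm_sub _ _ _
      _ ≤ _ := by
        rw [him]
        gcongr
        exact htangent.trans (by gcongr; exact Complex.abs_re_le_norm w)
  have hhalf : M * (1 / (2 * M) * ‖w‖ + |w.im|) = ‖w‖ / 2 + M * |w.im| := by
    field_simp
  rw [div_mul_eq_mul_div, one_mul, div_le_iff₀ (by positivity)]
  linarith

lemma IsRegularPoint.tendsto_stolzRegion (hs₀ : IsRegularPoint γ a b s₀ u) (hM : 0 < M)
    (U : Set ℂ) :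
    Tendsto (fun z => (z - γ s₀) / u) (𝓝[stolzRegion U (γ '' Icc a b) M (γ s₀)] (γ s₀))
      (𝓝[verticalCone (1 / (2 * M))] 0) := by
  have hlim : Tendsto (fun z => (z - γ s₀) / u) (𝓝 (γ s₀)) (𝓝 0) := by
    have : Continuous fun z => (z - γ s₀) / u := by fun_prop
    simpa using this.tendsto (γ s₀)
  have hre : Tendsto (fun z => s₀ + ((z - γ s₀) / u).re) (𝓝 (γ s₀)) (𝓝 s₀) := by
    simpa using ((Complex.continuous_re.tendsto 0).comp hlim).const_add s₀
  obtain ⟨p, q, harc, hpq⟩ := exists_isTangentArc hs₀.normalize.hasDerivAt (by simp)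
    (by positivity : 0 < 1 / (2 * M)) (Icc_mem_nhds hs₀.mem_Ioo.1 hs₀.mem_Ioo.2)
  refine tendsto_nhdsWithin_of_tendsto_nhds_of_eventually_within _
    (hlim.mono_left nhdsWithin_le_nhds) ?_
  filter_upwards [self_mem_nhdsWithin,
    nhdsWithin_le_nhds (hre.eventually (Icc_mem_nhds harc.left_lt harc.lt_right))]
    with z hz_stolz hz_re
  have hz := hz_stolz.2
  set w := (z - γ s₀) / u with hw
  have hu := norm_pos_iff.2 hs₀.ne_zero
  have hzw : z = γ s₀ + u * w := by rw [hw, mul_div_cancel₀ _ hs₀.ne_zero]; ring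
  have hw₀ : w ≠ 0 := by
    intro h0
    rw [h0, mul_zero, add_zero] at hzw
    rw [hzw, dist_self, Metric.infDist_zero_of_mem
      (mem_image_of_mem γ (Ioo_subset_Icc_self hs₀.mem_Ioo)), mul_zero] at hz
    exact hz.false
  refine mem_verticalCone_of_norm_le_mul_norm_sub (y := (γ (s₀ + w.re) - γ s₀) / u) hM hw₀ ?_
    (by simpa using harc.norm_sub_tangent_le _ hz_re)
  have hdist := hz.le.trans (mul_le_mul_of_nonneg_left
    (Metric.infDist_le_dist_of_mem (mem_image_of_mem γ (hpq hz_re))) hM.le)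
  rw [dist_eq_norm, dist_comm, dist_eq_norm] at hdist
  rw [hw, ← sub_div, norm_div, norm_div, ← mul_div_assoc, sub_sub_sub_cancel_right]
  gcongr

namespace IsRegularPoint

lemma eventually_reflection_notMem_image (hs₀ : IsRegularPoint γ a b s₀ u) (hγ : Continuous γ)
    (hM : 0 < M) (U : Set ℂ) :
    ∀ᶠ z in 𝓝[stolzRegion U (γ '' Icc a b) M (γ s₀)] (γ s₀),
      γ s₀ - (z - γ s₀) ∉ γ '' Icc a b := by
  have hcone := (tendsto_neg_nhdsWithin_verticalCone _).comp (hs₀.tendsto_stolzRegion hM U)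
  filter_upwards [hcone.eventually (hs₀.eventually_notMem_image hγ (by positivity))] with z hz
  rwa [Function.comp_apply, mul_neg, mul_div_cancel₀ _ hs₀.ne_zero, ← sub_eq_add_neg] at hz

lemma tendsto_cauchyJump_stolzRegion (hs₀ : IsRegularPoint γ a b s₀ u) (hγ : LipschitzWith K γ)
    (hh : ContinuousOn h (uIcc a b)) (hh₀ : h s₀ = 0) (hM : 0 < M) (U : Set ℂ) :
    Tendsto (fun z => cauchyJump γ a b h (γ s₀) (z - γ s₀))
      (𝓝[stolzRegion U (γ '' Icc a b) M (γ s₀)] (γ s₀)) (𝓝 0) := by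
  refine ((hs₀.tendsto_cauchyJump hγ hh hh₀ (by positivity)).comp
    (hs₀.tendsto_stolzRegion hM U)).congr fun z => ?_
  rw [Function.comp_apply, mul_div_cancel₀ _ hs₀.ne_zero]

lemma eventually_cauchyJump_one_ne_zero_stolzRegion (hs₀ : IsRegularPoint γ a b s₀ u)
    (hγ : LipschitzWith K γ) (hM : 1 < M) (U : Set ℂ) :
    ∀ᶠ z in 𝓝[stolzRegion U (γ '' Icc a b) M (γ s₀)] (γ s₀),
      cauchyJump γ a b 1 (γ s₀) (z - γ s₀) ≠ 0 := by
  have hm₁ : 1 / (2 * M) ≤ 1 := (div_le_one (by positivity)).2 (by linarith)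
  filter_upwards [(hs₀.tendsto_stolzRegion (by positivity) U).eventually
    (hs₀.eventually_cauchyJump_one_ne_zero hγ (by positivity) hm₁)] with z hz
  rwa [mul_div_cancel₀ _ hs₀.ne_zero] at hz

end IsRegularPoint

lemma IsJordanCurve.isRegularPoint (hγ : IsJordanCurve γ a b) (hs₀ : s₀ ∈ Ioo a b)
    (hderiv : HasDerivAt γ u s₀) (hu : u ≠ 0) : IsRegularPoint γ a b s₀ u where
  mem_Ioo := hs₀
  hasDerivAt := hderiv
  ne_zero := hu
  eq_of_apply_eq s hs hγs := by
    rcases hs.2.eq_or_lt with rfl | hsb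
    · have := hγ.injOn (left_mem_Ico.2 hγ.lt) (Ioo_subset_Ico_self hs₀) (hγ.closed.trans hγs)
      exact absurd this hs₀.1.ne
    · exact hγ.injOn ⟨hs.1, hsb⟩ (Ioo_subset_Ico_self hs₀) hγs

lemma ae_hausdorffMeasure_notMem_image_of_ae {P : ℝ → Prop} (hγ : LipschitzWith K γ)
    (hP : ∀ᵐ s, P s) :
    ∀ᵐ ζ ∂(Measure.hausdorffMeasure 1 : Measure ℂ), ζ ∉ γ '' {s | ¬P s} := by
  have hle := hγ.hausdorffMeasure_image_le (d := 1) zero_le_one {s | ¬P s}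
  rw [hausdorffMeasure_real, ae_iff.1 hP, mul_zero] at hle
  exact measure_eq_zero_iff_ae_notMem.1 (nonpos_iff_eq_zero.1 hle)

namespace IsJordanCurve

lemma cauchyIntegral_one_eq_of_mem_connectedComponentIn {z : ℂ} (hJ : IsJordanCurve γ a b)
    (hγ : LipschitzWith K γ) (hz : z ∈ connectedComponentIn (γ '' Icc a b)ᶜ x) :
    cauchyIntegral γ a b 1 z = cauchyIntegral γ a b 1 x :=
  cauchyIntegral_one_eq_of_isPreconnected hγ hJ.closed
    hJ.isClosed_image.isOpen_compl.connectedComponentIn isPreconnected_connectedComponentIn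
    (by rw [uIcc_of_le hJ.lt.le]; exact connectedComponentIn_subset _ _) hz
    (mem_connectedComponentIn (connectedComponentIn_nonempty_iff.1 ⟨z, hz⟩))

lemma not_isBounded_connectedComponentIn_of_cauchyIntegral_one_ne {z z' : ℂ}
    (hJ : IsJordanCurve γ a b) (hγ : LipschitzWith K γ) (hz : z ∉ γ '' Icc a b)
    (hz' : z' ∉ γ '' Icc a b)
    (hb : Bornology.IsBounded (connectedComponentIn (γ '' Icc a b)ᶜ z))
    (hne : cauchyIntegral γ a b 1 z ≠ cauchyIntegral γ a b 1 z') :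
    ¬Bornology.IsBounded (connectedComponentIn (γ '' Icc a b)ᶜ z') := fun hb' =>
  hne (hJ.cauchyIntegral_one_eq_of_mem_connectedComponentIn hγ
    (hJ.connectedComponentIn_eq_of_isBounded hz hz' hb hb' ▸ mem_connectedComponentIn hz))

section Stolz

variable (hJ : IsJordanCurve γ a b) (hγ : LipschitzWith K γ)
  (hb : Bornology.IsBounded (connectedComponentIn (γ '' Icc a b)ᶜ x))
  (hs₀ : IsRegularPoint γ a b s₀ u) (hM : 1 < M)
include hJ hγ hb hs₀ hM

-- The winding numbers of `z` and of its reflection in `γ s₀` differ, while only one component of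
-- the complement is bounded.
lemma eventually_not_isBounded_connectedComponentIn_reflection :
    ∀ᶠ z in 𝓝[stolzRegion (connectedComponentIn (γ '' Icc a b)ᶜ x) (γ '' Icc a b) M (γ s₀)] (γ s₀),
      ¬Bornology.IsBounded (connectedComponentIn (γ '' Icc a b)ᶜ (γ s₀ - (z - γ s₀))) := by
  filter_upwards [self_mem_nhdsWithin,
    hs₀.eventually_reflection_notMem_image hγ.continuous (by positivity) _,
    hs₀.eventually_cauchyJump_one_ne_zero_stolzRegion hγ hM _] with z hz hz_refl hjump
  rw [cauchyJump, add_sub_cancel, sub_ne_zero] at hjump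
  exact hJ.not_isBounded_connectedComponentIn_of_cauchyIntegral_one_ne hγ
    (connectedComponentIn_subset _ _ hz.1) hz_refl (connectedComponentIn_eq hz.1 ▸ hb) hjump

lemma eventually_cauchyJump_eq (hh : ContinuousOn h (uIcc a b))
    (hmom : HasVanishingMoments γ a b h) :
    ∀ᶠ z in 𝓝[stolzRegion (connectedComponentIn (γ '' Icc a b)ᶜ x) (γ '' Icc a b) M (γ s₀)] (γ s₀),
      cauchyJump γ a b h (γ s₀) (z - γ s₀) = cauchyIntegral γ a b h z := by
  filter_upwards [hs₀.eventually_reflection_notMem_image hγ.continuous (by positivity) _,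
    hJ.eventually_not_isBounded_connectedComponentIn_reflection hγ hb hs₀ hM] with z hz hunbdd
  rw [← uIcc_of_le hJ.lt.le] at hz hunbdd
  rw [cauchyJump, add_sub_cancel, hmom.cauchyIntegral_eq_zero_of_not_isBounded hγ hh hz hunbdd,
    sub_zero]

lemma eventually_cauchyJump_one_eq :
    ∀ᶠ z in 𝓝[stolzRegion (connectedComponentIn (γ '' Icc a b)ᶜ x) (γ '' Icc a b) M (γ s₀)] (γ s₀),
      cauchyJump γ a b 1 (γ s₀) (z - γ s₀) = cauchyIntegral γ a b 1 x := by
  filter_upwards [self_mem_nhdsWithin, hJ.eventually_cauchyJump_eq hγ hb hs₀ hM (h := 1)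
    continuousOn_const (HasVanishingMoments.one hγ hJ.closed)] with z hz hjump
  rw [hjump, hJ.cauchyIntegral_one_eq_of_mem_connectedComponentIn hγ hz.1]

lemma tendsto_cauchyIntegral_sub_mul (hh : ContinuousOn h (uIcc a b))
    (hmom : HasVanishingMoments γ a b h) :
    Tendsto (fun z => cauchyIntegral γ a b h z - h s₀ * cauchyIntegral γ a b 1 x)
      (𝓝[stolzRegion (connectedComponentIn (γ '' Icc a b)ᶜ x) (γ '' Icc a b) M (γ s₀)] (γ s₀))
      (𝓝 0) := by
  refine (hs₀.tendsto_cauchyJump_stolzRegion (h := fun s => h s - h s₀) hγ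
    (hh.sub continuousOn_const) (sub_self _) (by positivity) _).congr' ?_
  filter_upwards [self_mem_nhdsWithin, hJ.eventually_cauchyJump_one_eq hγ hb hs₀ hM,
    hs₀.eventually_reflection_notMem_image hγ.continuous (by positivity) _,
    hJ.eventually_cauchyJump_eq hγ hb hs₀ hM hh hmom] with z hz hz_one hz_refl hz_h
  rw [← uIcc_of_le hJ.lt.le] at hz_refl
  have hz_notMem : γ s₀ + (z - γ s₀) ∉ γ '' uIcc a b := by
    rw [add_sub_cancel, uIcc_of_le hJ.lt.le]
    exact connectedComponentIn_subset _ _ hz.1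
  rw [cauchyJump_sub_const hγ hh hz_notMem hz_refl, hz_one, hz_h]

lemma cauchyIntegral_one_ne_zero [(𝓝[stolzRegion (connectedComponentIn (γ '' Icc a b)ᶜ x)
    (γ '' Icc a b) M (γ s₀)] (γ s₀)).NeBot] : cauchyIntegral γ a b 1 x ≠ 0 := by
  obtain ⟨z, hz, hne⟩ := ((hJ.eventually_cauchyJump_one_eq hγ hb hs₀ hM).and
    (hs₀.eventually_cauchyJump_one_ne_zero_stolzRegion hγ hM _)).exists
  rwa [← hz]

lemma tendsto_cauchyIntegral_div (hh : ContinuousOn h (uIcc a b))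
    (hmom : HasVanishingMoments γ a b h) :
    Tendsto (fun z => cauchyIntegral γ a b h z / cauchyIntegral γ a b 1 x)
      (𝓝[stolzRegion (connectedComponentIn (γ '' Icc a b)ᶜ x) (γ '' Icc a b) M (γ s₀)] (γ s₀))
      (𝓝 (h s₀)) := by
  rcases (𝓝[stolzRegion (connectedComponentIn (γ '' Icc a b)ᶜ x) (γ '' Icc a b) M (γ s₀)]
    (γ s₀)).eq_or_neBot with hbot | _
  · rw [hbot]
    exact tendsto_bot
  have hne := hJ.cauchyIntegral_one_ne_zero hγ hb hs₀ hM
  have hlim := ((hJ.tendsto_cauchyIntegral_sub_mul hγ hb hs₀ hM hh hmom).div_const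
    (cauchyIntegral γ a b 1 x)).add_const (h s₀)
  rw [zero_div, zero_add] at hlim
  refine hlim.congr fun z => ?_
  rw [sub_div, mul_div_cancel_right₀ _ hne, sub_add_cancel]

end Stolz

lemma ae_hausdorffMeasure_exists_isRegularPoint (hJ : IsJordanCurve γ a b)
    (hγ : LipschitzWith K γ) (hderiv : ∀ᵐ s, s ∈ Icc a b → deriv γ s ≠ 0) :
    ∀ᵐ ζ ∂(Measure.hausdorffMeasure 1 : Measure ℂ).restrict (γ '' Icc a b),
      ∃ s₀ u, IsRegularPoint γ a b s₀ u ∧ γ s₀ = ζ := by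
  have hregular : ∀ᵐ s, s ∈ Icc a b → IsRegularPoint γ a b s (deriv γ s) := by
    filter_upwards [hderiv, Measure.ae_ne volume a, Measure.ae_ne volume b,
      hγ.ae_differentiableAt_real] with s hs_deriv hsa hsb hs_diff hs
    exact hJ.isRegularPoint ⟨hs.1.lt_of_ne' hsa, hs.2.lt_of_ne hsb⟩ hs_diff.hasDerivAt
      (hs_deriv hs)
  have hnull := ae_hausdorffMeasure_notMem_image_of_ae hγ hregular
  rw [ae_restrict_iff' hJ.isClosed_image.measurableSet]
  filter_upwards [hnull] with ζ hζ ⟨s, hs, hsζ⟩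
  by_contra hcon
  exact hζ ⟨s, fun hreg => hcon ⟨s, _, hreg hs, hsζ⟩, hsζ⟩

end IsJordanCurve

end Nontangential

/-- Proposition 6: let `δ` be a rectifiable Jordan curve with image `δ*`, `U` the Jordan domain
bounded by `δ` (the bounded connected component of `ℂ ∖ δ*`), and `f : δ* → ℂ` continuous with
`∫_δ P(z) f(z) dz = 0` for every analytic polynomial `P`. Then there exists a holomorphic `φ`
on `U` such that for almost every `ζ ∈ δ*` w.r.t. arclength (1-dimensional Hausdorff) measure,
`φ` has nontangential limit `f ζ` at `ζ` (limit along every Stolz region). -/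
theorem statement8 (δ : ℝ → ℂ) (a b : ℝ) (hδ : IsRectifiableJordanCurve δ a b)
    (U : Set ℂ) (hUbdd : Bornology.IsBounded U)
    (hUcomp : ∃ x : ℂ, U = connectedComponentIn ((δ '' Set.Icc a b)ᶜ) x)
    (f : ℂ → ℂ) (hf : ContinuousOn f (δ '' Set.Icc a b))
    (hzero : ∀ P : Polynomial ℂ, IsRSIntegral (fun z => P.eval z * f z) δ a b 0) :
    ∃ φ : ℂ → ℂ, DifferentiableOn ℂ φ U ∧
      ∀ᵐ ζ ∂((MeasureTheory.Measure.hausdorffMeasure 1 :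
          MeasureTheory.Measure ℂ).restrict (δ '' Set.Icc a b)),
        ∀ M : ℝ, 1 < M →
          Filter.Tendsto φ
            (nhdsWithin ζ {z ∈ U | dist z ζ < M * Metric.infDist z (δ '' Set.Icc a b)})
            (nhds (f ζ)) := by
  have hδJ := hδ.isJordanCurve
  obtain ⟨γ, v, hγ, hv, hspeed⟩ :=
    exists_arclength_reparametrization hδJ.lt.le hδJ.continuousOn hδ.boundedVariationOn
  have hγJ := hv.isJordanCurve hδJ hγ.continuous.continuousOn
  have hmom : HasVanishingMoments γ (v a) (v b) (f ∘ γ) := fun k => by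
    simpa using (hzero (X ^ k)).integral_eq hv hγ hδJ.lt.le hδJ.continuousOn
      ((Polynomial.continuous _).continuousOn.mul hf)
  obtain ⟨x, rfl⟩ := hUcomp
  rw [← hv.image_eq hδJ.lt.le] at hf hUbdd ⊢
  have hh : ContinuousOn (f ∘ γ) (uIcc (v a) (v b)) := by
    rw [uIcc_of_le hγJ.lt.le]
    exact hf.comp hγ.continuous.continuousOn (mapsTo_image γ _)
  refine ⟨fun z => cauchyIntegral γ (v a) (v b) (f ∘ γ) z / cauchyIntegral γ (v a) (v b) 1 x,
    (differentiableOn_cauchyIntegral hγ hh ?_).div_const _, ?_⟩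
  · rw [uIcc_of_le hγJ.lt.le]
    exact connectedComponentIn_subset _ _
  · have hderiv : ∀ᵐ s, s ∈ Icc (v a) (v b) → deriv γ s ≠ 0 :=
      hspeed.mono fun s hs hs_mem => norm_ne_zero_iff.1 (hs hs_mem ▸ one_ne_zero)
    filter_upwards [hγJ.ae_hausdorffMeasure_exists_isRegularPoint hγ hderiv] with ζ hζ M hM
    obtain ⟨s₀, u, hs₀, rfl⟩ := hζ
    exact hγJ.tendsto_cauchyIntegral_div hγ hUbdd hs₀ hM hh hmom
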